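/- arXiv:1309.0173 — 2 statements merged into one kernel-verified Lean document; each statement's English description precedes it below -/
import Mathlib

section
/- Let G be a finite group and let N be a minimal normal subgroup of G isomorphic to a direct product of k copies of the alternating group A5. Then the number of irreducible complex characters χ of G with χ(1) = 3 whose kernel does not contain N is at most 2k times the number of linear characters of G; that is, n_3(G|N) ≤ 2k · n_1(G). -/
open CategoryTheory

/-- The set of irreducible complex characters of `G`: characters of simple
finite-dimensional complex representations of `G`. -/
noncomputable def IrrChar (G : Type) [Group G] : Set (G → ℂ) :=
  {χ | ∃ V : FDRep ℂ G, Simple V ∧ χ = fun g => V.character g}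

/-- The degree of a character, read off from its value at `1`. -/
noncomputable def charDeg {G : Type} [Group G] (χ : G → ℂ) : ℕ :=
  ⌊(χ 1).re⌋₊

/-- The average degree of the irreducible characters of `G` satisfying a
predicate `p` (with the convention that the average of the empty set is `0`). -/
noncomputable def acdRel (G : Type) [Group G] (p : (G → ℂ) → Prop) : ℝ :=
  (∑ᶠ χ ∈ {χ ∈ IrrChar G | p χ}, (charDeg χ : ℝ)) /
    ({χ ∈ IrrChar G | p χ} : Set (G → ℂ)).ncard

/-- The average character degree of `G`. -/
noncomputable def acd (G : Type) [Group G] : ℝ := acdRel G fun _ => True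

abbrev A5 := alternatingGroup (Fin 5)
def cc : A5 := ⟨finRotate 5, by rw [Equiv.Perm.mem_alternatingGroup]; decide +kernel⟩

/-- class index -/
def cls (g : A5) : Fin 5 :=
  if g = 1 then 0 else if g^2 = 1 then 1 else if g^3 = 1 then 2 else
    if (∃ h, h * cc * h⁻¹ = g) then 3 else 4

set_option synthInstance.maxHeartbeats 400000 in
set_option synthInstance.maxSize 2000 in
theorem A5_data : (∀ g : A5, (∃ h : A5, h * g * h⁻¹ = g⁻¹) ∧ (cls g = 0 → g = 1) ∧
      (cls g = 1 → g ≠ 1 ∧ g ^ 2 = 1) ∧ (cls g = 2 → g ≠ 1 ∧ g ^ 3 = 1) ∧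
      (cls g = 3 → ∃ h, h * cc * h⁻¹ = g) ∧ (cls g = 4 → ∃ h, h * (cc * cc) * h⁻¹ = g)) ∧
    (∀ i : Fin 5, (Finset.univ.filter fun g : A5 => cls g = i).card = ![1, 15, 20, 12, 12] i) ∧
    (cc ≠ 1 ∧ cc ^ 5 = 1) ∧ ∃ a b : A5, a * b ≠ b * a := by
  decide +kernel

theorem A5_conjInv (g : A5) : ∃ h : A5, h * g * h⁻¹ = g⁻¹ := (A5_data.1 g).1
theorem cls_zero (g : A5) : cls g = 0 → g = 1 := (A5_data.1 g).2.1
theorem cls_one (g : A5) : cls g = 1 → g ≠ 1 ∧ g ^ 2 = 1 := (A5_data.1 g).2.2.1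
theorem cls_two (g : A5) : cls g = 2 → g ≠ 1 ∧ g ^ 3 = 1 := (A5_data.1 g).2.2.2.1
theorem cls_three (g : A5) : cls g = 3 → ∃ h, h * cc * h⁻¹ = g := (A5_data.1 g).2.2.2.2.1
theorem cls_four (g : A5) : cls g = 4 → ∃ h, h * (cc * cc) * h⁻¹ = g :=
  (A5_data.1 g).2.2.2.2.2
theorem cls_card (i : Fin 5) : (Finset.univ.filter fun g : A5 => cls g = i).card =
    ![1, 15, 20, 12, 12] i := A5_data.2.1 i
theorem cc_ne : cc ≠ 1 ∧ cc ^ 5 = 1 := A5_data.2.2.1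
theorem A5_noncomm : ∃ a b : A5, a * b ≠ b * a := A5_data.2.2.2

theorem A5_hom_trivial {M : Type*} [Monoid M] (f : A5 →* M)
    (h : ∀ a b, f a * f b = f b * f a) (a : A5) : f a = 1 := by
  have : IsSimpleGroup A5 := alternatingGroup.isSimpleGroup (by simp)
  rcases (MonoidHom.normal_ker f).eq_bot_or_eq_top with hk | hk
  · obtain ⟨a, b, hab⟩ := A5_noncomm
    exact absurd ((MonoidHom.ker_eq_bot_iff f).1 hk (by simpa using h a b)) hab
  · have : a ∈ f.ker := by rw [hk]; trivial
    exact this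

theorem A5_hom_faithful {M : Type*} [Monoid M] (f : A5 →* M)
    (h : ∃ a, f a ≠ 1) (a : A5) (ha : a ≠ 1) : f a ≠ 1 := by
  have : IsSimpleGroup A5 := alternatingGroup.isSimpleGroup (by simp)
  rcases (MonoidHom.normal_ker f).eq_bot_or_eq_top with hk | hk
  · intro h1
    have : a ∈ f.ker := h1
    rw [hk] at this
    exact ha this
  · obtain ⟨b, hb⟩ := h
    have : b ∈ f.ker := by rw [hk]; trivial
    exact absurd this hb

open Matrix Polynomial in
theorem mat3 (M K : Matrix (Fin 3) (Fin 3) ℂ) (hMK : M * K = 1) (hdet : M.det = 1)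
    (htr : K.trace = M.trace) :
    (∀ z : ℂ, (Matrix.scalar (Fin 3) z - M).det = z^3 - M.trace * z^2 + M.trace * z - 1) ∧
    (M * M).trace = M.trace ^ 2 - 2 * M.trace := by
  have hK : K = M.adjugate := by
    have h1 := M.adjugate_mul
    rw [hdet, one_smul] at h1
    calc K = (M.adjugate * M) * K := by rw [h1, one_mul]
      _ = _ := by rw [mul_assoc, hMK, mul_one]
  rw [hK, adjugate_fin_three] at htr
  simp [trace_fin_three] at htr
  rw [det_fin_three] at hdet
  constructor
  · intro z
    rw [det_fin_three]
    simp [trace_fin_three]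
    linear_combination (-1) * hdet + z * htr
  · simp [trace_fin_three, Matrix.mul_apply, Fin.sum_univ_three]
    linear_combination (-2) * htr

open Matrix Polynomial in
theorem mat3_root (M K : Matrix (Fin 3) (Fin 3) ℂ) (hMK : M * K = 1) (hdet : M.det = 1)
    (htr : K.trace = M.trace) (n : ℕ) (hn : n ≠ 0) (hM : M ^ n = 1) (hne : M ≠ 1) :
    ∃ z : ℂ, z ^ n = 1 ∧ z ≠ 1 ∧ M.trace * z = z + z ^ 2 + 1 := by
  obtain ⟨hd, -⟩ := mat3 M K hMK hdet htr
  obtain ⟨z, hz⟩ : ∃ z : ℂ, z^2 + (1 - M.trace) * z + 1 = 0 := by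
    obtain ⟨s, hs⟩ := IsAlgClosed.exists_pow_nat_eq ((1 - M.trace)^2 - 4) (n := 2) (by norm_num)
    refine ⟨(-(1 - M.trace) + s)/2, ?_⟩
    linear_combination hs / 4
  refine ⟨z, ?_, ?_, by linear_combination -hz⟩
  · have h0 : (Matrix.scalar (Fin 3) z - M).det = 0 := by
      rw [hd]; linear_combination (z - 1) * hz
    obtain ⟨v, hv, hv0⟩ := Matrix.exists_mulVec_eq_zero_iff.2 h0
    have hv1 : M *ᵥ v = z • v := by
      rw [sub_mulVec, sub_eq_zero] at hv0
      rw [← hv0]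
      ext i
      simp [Matrix.scalar, mulVec_diagonal]
    have hp : ∀ m : ℕ, (M ^ m) *ᵥ v = z ^ m • v := by
      intro m
      induction m with
      | zero => simp
      | succ m ih => rw [pow_succ, ← mulVec_mulVec, hv1, mulVec_smul, ih, smul_smul, pow_succ, mul_comm]
    have := hp n
    rw [hM, one_mulVec] at this
    obtain ⟨i, hi⟩ := Function.ne_iff.1 hv
    have h2 := congrFun this i
    simp at h2 hi
    exact (mul_right_cancel₀ hi (by rw [one_mul]; exact h2)).symm
  · rintro rfl
    have ht : M.trace = 3 := by linear_combination -hz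
    have hc : M.charpoly = (X - 1) ^ 3 := by
      apply Polynomial.funext
      intro r
      rw [Matrix.eval_charpoly, hd, ht]
      simp
      ring
    have hN : (M - 1) ^ 3 = 0 := by
      have := M.aeval_self_charpoly
      rw [hc] at this
      simpa using this
    have hnil : IsNilpotent (M - 1) := ⟨3, hN⟩
    have hg : (∑ i ∈ Finset.range n, M ^ i) * (M - 1) = 0 := by
      rw [geom_sum_mul, hM, sub_self]
    have hu : IsUnit (∑ i ∈ Finset.range n, M ^ i) := by
      have hdv : ∃ Q : Matrix (Fin 3) (Fin 3) ℂ, Commute (M - 1) Q ∧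
          (∑ i ∈ Finset.range n, M ^ i) = (n : Matrix (Fin 3) (Fin 3) ℂ) + (M - 1) * Q := by
        refine ⟨∑ i ∈ Finset.range n, ∑ j ∈ Finset.range i, M ^ j, ?_, ?_⟩
        · refine Commute.sum_right _ _ _ fun i _ => Commute.sum_right _ _ _ fun j _ => ?_
          exact ((Commute.refl M).sub_left (Commute.one_left M)).pow_right j
        · rw [Finset.mul_sum]
          simp_rw [mul_geom_sum]
          simp
      obtain ⟨Q, hQ, hQe⟩ := hdv
      rw [hQe]
      apply IsNilpotent.isUnit_add_left_of_commute
      · exact hQ.isNilpotent_mul_right hnil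
      · have : ((n : ℂ) : ℂ) ≠ 0 := by exact_mod_cast hn
        have h3 := (IsUnit.mk0 (n : ℂ) this).map (algebraMap ℂ (Matrix (Fin 3) (Fin 3) ℂ))
        simpa using h3
      · exact (Nat.cast_commute n _).symm
    apply hne
    have := hu.mul_left_cancel (hg.trans (mul_zero _).symm)
    exact sub_eq_zero.1 this

theorem A5_mat_char (f : A5 →* Matrix (Fin 3) (Fin 3) ℂ) (h : ∃ a, f a ≠ 1) :
    (f cc).trace ^ 2 - (f cc).trace - 1 = 0 ∧ (∀ g, (f g⁻¹).trace = (f g).trace) ∧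
    ∀ g, (f g).trace = ![3, -1, 0, (f cc).trace, 1 - (f cc).trace] (cls g) := by
  have hconj : ∀ g k, (f (k * g * k⁻¹)).trace = (f g).trace := by
    intro g k
    rw [map_mul, Matrix.trace_mul_comm, ← map_mul, inv_mul_cancel_left]
  have hinv : ∀ g, (f g⁻¹).trace = (f g).trace := by
    intro g
    obtain ⟨k, hk⟩ := A5_conjInv g
    rw [← hk, hconj]
  have hdet : ∀ g, (f g).det = 1 := by
    intro g
    exact A5_hom_trivial ((Matrix.detMonoidHom).comp f) (fun a b => mul_comm _ _) g
  have hmul : ∀ g, f g * f g⁻¹ = 1 := fun g => by rw [← map_mul, mul_inv_cancel, map_one]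
  have hroot : ∀ g n, g ≠ 1 → g ^ n = 1 → n ≠ 0 →
      ∃ z : ℂ, z ^ n = 1 ∧ z ≠ 1 ∧ (f g).trace * z = z + z ^ 2 + 1 := by
    intro g n hg hgn hn
    exact mat3_root (f g) (f g⁻¹) (hmul g) (hdet g) (hinv g) n hn (by rw [← map_pow, hgn, map_one])
      (A5_hom_faithful f h g hg)
  have hsq : ∀ g, (f (g * g)).trace = (f g).trace ^ 2 - 2 * (f g).trace := by
    intro g
    rw [map_mul]
    exact (mat3 (f g) (f g⁻¹) (hmul g) (hdet g) (hinv g)).2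
  have hcc : (f cc).trace ^ 2 - (f cc).trace - 1 = 0 := by
    obtain ⟨z, h5, h1, ht⟩ := hroot cc 5 cc_ne.1 cc_ne.2 (by norm_num)
    have hs : z^4 + z^3 + z^2 + z + 1 = 0 := by
      apply mul_left_cancel₀ (sub_ne_zero.2 h1)
      linear_combination h5
    have hz : z ≠ 0 := by rintro rfl; norm_num at h5
    apply mul_left_cancel₀ (pow_ne_zero 2 hz)
    linear_combination ((f cc).trace * z + (z + z^2 + 1) - z) * ht + hs
  refine ⟨hcc, hinv, fun g => ?_⟩
  have hc : cls g = 0 ∨ cls g = 1 ∨ cls g = 2 ∨ cls g = 3 ∨ cls g = 4 := by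
    generalize cls g = x
    revert x; decide
  rcases hc with hc | hc | hc | hc | hc
  · rw [hc, cls_zero g hc]; simp
  · rw [hc]
    obtain ⟨h1, h2⟩ := cls_one g hc
    obtain ⟨z, hz, hz1, ht⟩ := hroot g 2 h1 h2 (by norm_num)
    have : z = -1 := by
      apply mul_left_cancel₀ (sub_ne_zero.2 hz1)
      linear_combination hz
    subst this
    simp
    linear_combination -ht
  · rw [hc]
    obtain ⟨h1, h2⟩ := cls_two g hc
    obtain ⟨z, hz, hz1, ht⟩ := hroot g 3 h1 h2 (by norm_num)
    have hs : z + z^2 + 1 = 0 := by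
      apply mul_left_cancel₀ (sub_ne_zero.2 hz1)
      linear_combination hz
    have hz0 : z ≠ 0 := by rintro rfl; norm_num at hz
    simp
    rw [hs] at ht
    exact (mul_eq_zero.1 ht).resolve_right hz0
  · obtain ⟨k, rfl⟩ := cls_three g hc
    rw [hc, hconj]; simp
  · obtain ⟨k, rfl⟩ := cls_four g hc
    rw [hc, hconj, hsq]; simp
    linear_combination hcc

/-- The generic degree three character. -/
noncomputable def chi (t : ℂ) (g : A5) : ℂ := ![3, -1, 0, t, 1 - t] (cls g)

theorem chi_norm (t : ℂ) (ht : t ^ 2 - t - 1 = 0) : ∑ g : A5, chi t g * chi t g = 60 := by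
  have : ∑ g : A5, chi t g * chi t g =
      ∑ i : Fin 5, (Finset.univ.filter fun g : A5 => cls g = i).card •
        (![3, -1, 0, t, 1 - t] i * ![3, -1, 0, t, 1 - t] i : ℂ) := by
    rw [← Finset.sum_fiberwise (s := Finset.univ) (g := cls)]
    refine Finset.sum_congr rfl fun i _ => ?_
    rw [← Finset.sum_const]
    refine Finset.sum_congr rfl fun g hg => ?_
    rw [chi, (Finset.mem_filter.1 hg).2]
  rw [this, Fin.sum_univ_five, cls_card, cls_card, cls_card, cls_card, cls_card]
  simp
  linear_combination 24 * ht

theorem A5_rep_char {V : Type} [AddCommGroup V] [Module ℂ V] [FiniteDimensional ℂ V]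
    (hV : Module.finrank ℂ V = 3) (ρ : A5 →* (V →ₗ[ℂ] V)) (h : ∃ a, ρ a ≠ 1) :
    ∃ t : ℂ, t ^ 2 - t - 1 = 0 ∧ (∀ g, LinearMap.trace ℂ V (ρ g) = chi t g) ∧
      (∀ g, chi t g⁻¹ = chi t g) := by
  let b : Module.Basis (Fin 3) ℂ V := Module.finBasisOfFinrankEq ℂ V hV
  let f : A5 →* Matrix (Fin 3) (Fin 3) ℂ :=
    ((LinearMap.toMatrixAlgEquiv b : _ →* Matrix (Fin 3) (Fin 3) ℂ)).comp ρ
  have hf : ∀ g, f g = LinearMap.toMatrix b b (ρ g) := fun g => rfl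
  have htr : ∀ g, LinearMap.trace ℂ V (ρ g) = (f g).trace := by
    intro g; rw [hf, LinearMap.trace_eq_matrix_trace ℂ b]
  obtain ⟨a, ha⟩ := h
  obtain ⟨h1, h2, h3⟩ := A5_mat_char f ⟨a, fun hh => ha ((LinearMap.toMatrixAlgEquiv b).injective
    (hh.trans (map_one _).symm))⟩
  refine ⟨(f cc).trace, h1, fun g => by rw [htr, h3]; rfl, fun g => ?_⟩
  have := h2 g
  rw [h3, h3 g] at this
  exact this

theorem A5_simple {V : Type} [AddCommGroup V] [Module ℂ V] [FiniteDimensional ℂ V]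
    (ρ : Representation ℂ A5 V) (t : ℂ) (ht : t ^ 2 - t - 1 = 0)
    (h1 : ∀ g, LinearMap.trace ℂ V (ρ g) = chi t g) (h2 : ∀ g, chi t g⁻¹ = chi t g) :
    Simple (FDRep.of ρ) := by
  rw [FDRep.simple_iff_char_is_norm_one]
  have hc : ∀ g, (FDRep.of ρ).character g = chi t g := h1
  simp_rw [hc, h2, chi_norm t ht]
  rw [nat_card_alternatingGroup]
  norm_num [Nat.factorial]

theorem A5_schur {V : Type} [AddCommGroup V] [Module ℂ V] [FiniteDimensional ℂ V]
    (ρ : Representation ℂ A5 V) [Simple (FDRep.of ρ)]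
    (T : V →ₗ[ℂ] V) (hT : ∀ g, T * ρ g = ρ g * T) : ∃ c : ℂ, T = c • 1 := by
  let F : FDRep.of ρ ⟶ FDRep.of ρ :=
    ⟨InducedCategory.homMk (ModuleCat.ofHom T), fun g => by
      ext1; exact hT g⟩
  obtain ⟨c, hc⟩ := endomorphism_simple_eq_smul_id ℂ F
  refine ⟨c, ?_⟩
  have := congrArg (fun X : FDRep.of ρ ⟶ FDRep.of ρ => X.hom.hom.hom) hc
  exact this.symm

theorem A5_iso {V W : Type} [AddCommGroup V] [Module ℂ V] [FiniteDimensional ℂ V]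
    [AddCommGroup W] [Module ℂ W] [FiniteDimensional ℂ W]
    (ρ : Representation ℂ A5 V) (σ : Representation ℂ A5 W)
    [Simple (FDRep.of ρ)] [Simple (FDRep.of σ)]
    (h : ∀ g, LinearMap.trace ℂ V (ρ g) = LinearMap.trace ℂ W (σ g)) :
    ∃ e : V ≃ₗ[ℂ] W, ∀ g, σ g = e.conj (ρ g) := by
  classical
  have hnz : ((Nat.card A5 : ℕ) : ℂ) ≠ 0 := by exact_mod_cast Nat.card_pos.ne'
  have := invertibleOfNonzero hnz
  have hc : ∀ g, (FDRep.of ρ).character g = (FDRep.of σ).character g := h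
  have h1 := FDRep.char_orthonormal (FDRep.of ρ) (FDRep.of σ)
  have h2 := FDRep.char_orthonormal (FDRep.of σ) (FDRep.of σ)
  simp_rw [hc] at h1
  rw [h2, if_pos ⟨Iso.refl _⟩] at h1
  by_cases hn : Nonempty (FDRep.of ρ ≅ FDRep.of σ)
  · obtain ⟨i⟩ := hn
    exact ⟨FDRep.isoToLinearEquiv i, fun g => FDRep.Iso.conj_ρ i g⟩
  · rw [if_neg hn] at h1
    norm_num at h1

theorem linear_char (G : Type) [Group G] [Finite G] (l : G →* ℂ) :
    (fun g => l g) ∈ {χ ∈ IrrChar G | charDeg χ = 1} := by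
  have := Fintype.ofFinite G
  let ρ : Representation ℂ G ℂ := (algebraMap ℂ (Module.End ℂ ℂ) : ℂ →* _).comp l
  have hc : ∀ g, (FDRep.of ρ).character g = l g := by
    intro g
    change LinearMap.trace ℂ ℂ (algebraMap ℂ (Module.End ℂ ℂ) (l g)) = l g
    rw [Algebra.algebraMap_eq_smul_one, map_smul, LinearMap.trace_one]
    simp
  refine ⟨⟨FDRep.of ρ, ?_, funext fun g => (hc g).symm⟩, by simp [charDeg]⟩
  rw [FDRep.simple_iff_char_is_norm_one]
  simp_rw [hc, ← map_mul]
  simp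

theorem charDeg_eq (G : Type) [Group G] (V : FDRep ℂ G) :
    charDeg (fun g => V.character g) = Module.finrank ℂ V := by
  simp [charDeg]

theorem linear_finite (G : Type) [Group G] [Finite G] :
    {χ ∈ IrrChar G | charDeg χ = 1}.Finite := by
  have hpos : 0 < Nat.card G := Nat.card_pos
  have hfin : (Set.univ.pi fun _ : G => {z : ℂ | z ^ Nat.card G = 1}).Finite := by
    refine Set.Finite.pi fun _ : G => ?_
    refine (Polynomial.nthRoots (Nat.card G) (1 : ℂ)).toFinset.finite_toSet.subset ?_
    intro z hz
    simp [Polynomial.mem_nthRoots hpos]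
    exact hz
  refine hfin.subset ?_
  rintro χ ⟨⟨V, -, rfl⟩, hd⟩ g -
  rw [charDeg_eq] at hd
  change V.character g ^ _ = 1
  obtain ⟨c, hc⟩ : ∃ c : ℂ, V.ρ g = c • 1 := by
    have h1 : Module.finrank ℂ (V →ₗ[ℂ] V) = 1 := by rw [Module.finrank_linearMap, hd]
    have : Nontrivial V := Module.nontrivial_of_finrank_pos (R := ℂ) (by omega)
    obtain ⟨c, hc⟩ := (finrank_eq_one_iff_of_nonzero' (1 : V →ₗ[ℂ] V) one_ne_zero).1 h1 (V.ρ g)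
    exact ⟨c, hc.symm⟩
  have h2 : V.character g = c := by
    rw [FDRep.character, hc, map_smul, LinearMap.trace_one, hd]; simp
  have h3 : V.ρ g ^ Nat.card G = 1 := by rw [← map_pow, pow_card_eq_one', map_one]
  rw [h2]
  have h4 := congrArg (LinearMap.trace ℂ V) h3
  rw [hc, smul_pow, one_pow, map_smul, LinearMap.trace_one, hd] at h4
  simpa using h4

theorem twist {G V : Type} [Group G] [AddCommGroup V] [Module ℂ V] [FiniteDimensional ℂ V]
    [Nontrivial V] (N : Subgroup G) [N.Normal] (ρ σ : G →* (V →ₗ[ℂ] V))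
    (hN : ∀ n ∈ N, σ n = ρ n)
    (hS : ∀ T : V →ₗ[ℂ] V, (∀ n ∈ N, T * ρ n = ρ n * T) → ∃ c : ℂ, T = c • 1) :
    ∃ l : G →* ℂ, ∀ g, σ g = l g • ρ g := by
  have h1 : ∀ g, ∃ c : ℂ, σ g * ρ g⁻¹ = c • 1 := by
    intro g
    apply hS
    intro n hn
    have hm : g⁻¹ * n * g ∈ N := by
      simpa using (inferInstance : N.Normal).conj_mem n hn g⁻¹
    calc σ g * ρ g⁻¹ * ρ n = σ g * ρ (g⁻¹ * n * g) * ρ g⁻¹ := by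
          simp only [mul_assoc, ← map_mul]; congr 2; group
      _ = σ g * σ (g⁻¹ * n * g) * ρ g⁻¹ := by rw [hN _ hm]
      _ = σ n * (σ g * ρ g⁻¹) := by
          rw [← mul_assoc, ← map_mul, ← map_mul]; congr 2; group
      _ = _ := by rw [hN n hn]
  choose l hl using h1
  have h2 : ∀ g, σ g = l g • ρ g := by
    intro g
    calc σ g = σ g * ρ g⁻¹ * ρ g := by rw [mul_assoc, ← map_mul]; simp
      _ = _ := by rw [hl]; simp
  have hinj : ∀ (g : G) (a b : ℂ), a • ρ g = b • ρ g → a = b := by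
    intro g a b h
    have h3 := congrArg (fun T => T * ρ g⁻¹) h
    simp only [smul_mul_assoc, ← map_mul, mul_inv_cancel, map_one] at h3
    exact smul_left_injective ℂ (one_ne_zero (α := V →ₗ[ℂ] V)) h3
  refine ⟨⟨⟨l, ?_⟩, ?_⟩, h2⟩
  · apply hinj 1
    rw [← h2]; simp
  · intro a b
    apply hinj (a * b)
    rw [← h2, map_mul, map_mul, h2 a, h2 b, smul_mul_smul_comm]

theorem restrict_data {N : Type} [Group N] {k : ℕ} (e : N ≃* (Fin k → A5))
    {V : Type} [AddCommGroup V] [Module ℂ V] [FiniteDimensional ℂ V]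
    (hV : Module.finrank ℂ V = 3) (ρ : N →* (V →ₗ[ℂ] V)) (h : ∃ n, ρ n ≠ 1) :
    ∃ (i : Fin k) (t : ℂ) (τ : A5 →* (V →ₗ[ℂ] V)), t ^ 2 - t - 1 = 0 ∧
      (∀ n, ρ n = τ (e n i)) ∧ (∀ g, LinearMap.trace ℂ V (τ g) = chi t g) ∧
      (∀ g, chi t g⁻¹ = chi t g) := by
  let r : (Fin k → A5) →* (V →ₗ[ℂ] V) := ρ.comp e.symm.toMonoidHom
  have hr : ∀ n, ρ n = r (e n) := fun n => by simp [r]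
  let τ : Fin k → A5 →* (V →ₗ[ℂ] V) := fun i => r.comp (MonoidHom.mulSingle (fun _ => A5) i)
  have hex : ∃ i, ∃ a, τ i a ≠ 1 := by
    by_contra hcon
    push Not at hcon
    obtain ⟨n, hn⟩ := h
    apply hn
    rw [hr]
    have : r = 1 := by
      apply MonoidHom.pi_ext
      intro i a
      exact hcon i a
    rw [this]; rfl
  obtain ⟨i, hi⟩ := hex
  obtain ⟨t, ht, h1, h2⟩ := A5_rep_char hV (τ i) hi
  have hs := A5_simple (τ i) t ht h1 h2
  refine ⟨i, t, τ i, ht, fun n => ?_, h1, h2⟩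
  rw [hr]
  have : r = (τ i).comp (Pi.evalMonoidHom (fun _ : Fin k => A5) i) := by
    apply MonoidHom.pi_ext
    intro j a
    by_cases hij : j = i
    · subst hij
      simp [τ]
    · have hcomm : ∀ a b, τ j a * τ i b = τ i b * τ j a := by
        intro a b
        have := Pi.mulSingle_commute (f := fun _ : Fin k => A5) hij a b
        have h3 := this.map r
        exact h3
      have hsc : ∀ a, ∃ c : ℂ, τ j a = c • 1 := fun a =>
        A5_schur (τ i) (τ j a) (fun g => hcomm a g)
      have := A5_hom_trivial (τ j) (fun a b => by
        obtain ⟨c, hc⟩ := hsc a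
        rw [hc]; simp) a
      have h4 : r (Pi.mulSingle j a) = 1 := this
      rw [h4]
      simp [Pi.mulSingle_eq_of_ne (Ne.symm hij)]
  conv_lhs => rw [this]
  rfl

theorem main_twist {G : Type} [Group G] [Finite G] (N : Subgroup G) [N.Normal]
    {k : ℕ} (e : N ≃* (Fin k → A5)) (V W : FDRep ℂ G) (hV : Module.finrank ℂ V = 3)
    (i : Fin k) (t : ℂ) (ht : t ^ 2 - t - 1 = 0) (τ : A5 →* (V →ₗ[ℂ] V))
    (τ' : A5 →* (W →ₗ[ℂ] W))
    (h1 : ∀ n : N, V.ρ n = τ (e n i)) (h1' : ∀ n : N, W.ρ n = τ' (e n i))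
    (h2 : ∀ g, LinearMap.trace ℂ V (τ g) = chi t g)
    (h2' : ∀ g, LinearMap.trace ℂ W (τ' g) = chi t g)
    (h3 : ∀ g, chi t g⁻¹ = chi t g) :
    ∃ l : G →* ℂ, ∀ g, W.character g = l g * V.character g := by
  have hs := A5_simple τ t ht h2 h3
  have hs' := A5_simple τ' t ht h2' h3
  obtain ⟨f, hf⟩ := A5_iso τ τ' (fun g => by rw [h2, h2'])
  have : Nontrivial V := Module.nontrivial_of_finrank_pos (R := ℂ) (by omega)
  let σ : G →* (V →ₗ[ℂ] V) := (f.symm.conjRingEquiv : _ →* _).comp W.ρ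
  have hσ : ∀ g, σ g = f.symm.conj (W.ρ g) := fun g => rfl
  obtain ⟨l, hl⟩ := twist N V.ρ σ (fun n hn => by
      rw [hσ, h1' ⟨n, hn⟩, h1 ⟨n, hn⟩, hf]
      ext v; simp [LinearEquiv.conj_apply]) (fun T hT => by
      apply A5_schur τ T
      intro g
      have := hT _ (e.symm (Pi.mulSingle i g)).2
      rw [h1] at this
      simpa using this)
  refine ⟨l, fun g => ?_⟩
  have := congrArg (LinearMap.trace ℂ V) (hl g)
  rw [hσ, LinearMap.trace_conj', map_smul] at this
  exact this

theorem quad_roots : ∃ r : Bool → ℂ, ∀ t : ℂ, t ^ 2 - t - 1 = 0 → ∃ b, t = r b := by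
  obtain ⟨s, hs⟩ := IsAlgClosed.exists_pow_nat_eq (5 : ℂ) (n := 2) (by norm_num)
  refine ⟨fun b => if b then (1 + s) / 2 else (1 - s) / 2, fun t ht => ?_⟩
  have : (t - (1 + s) / 2) * (t - (1 - s) / 2) = 0 := by linear_combination ht - hs / 4
  rcases mul_eq_zero.1 this with h | h
  · exact ⟨true, by simpa using sub_eq_zero.1 h⟩
  · exact ⟨false, by simpa using sub_eq_zero.1 h⟩

/-- If `N` is a minimal normal subgroup of a finite group `G` isomorphic to a
direct product of `k` copies of `A₅`, then the number of degree-`3` irreducible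
characters of `G` whose kernel does not contain `N` is at most `2k` times the
number of linear characters of `G`. -/
theorem card_degree_three_over_N_le (G : Type) [Group G] [Finite G]
    (N : Subgroup G) [N.Normal] (hnt : N ≠ ⊥)
    (hmin : ∀ K : Subgroup G, K.Normal → K ≤ N → K = ⊥ ∨ K = N)
    (k : ℕ) (hiso : Nonempty (N ≃* (Fin k → alternatingGroup (Fin 5)))) :
    ({χ ∈ IrrChar G | charDeg χ = 3 ∧ ∃ n ∈ N, χ n ≠ χ 1} : Set (G → ℂ)).ncard ≤
      2 * k * ({χ ∈ IrrChar G | charDeg χ = 1} : Set (G → ℂ)).ncard := by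
  classical
  obtain ⟨e⟩ := hiso
  obtain ⟨r, hr⟩ := quad_roots
  set L : Set (G → ℂ) := {χ ∈ IrrChar G | charDeg χ = 1} with hL
  have hLf : L.Finite := linear_finite G
  let P : Fin k × Bool → (G → ℂ) → Prop := fun p χ => ∃ V : FDRep ℂ G,
    Module.finrank ℂ V = 3 ∧ (χ = fun g => V.character g) ∧ r p.2 ^ 2 - r p.2 - 1 = 0 ∧
    ∃ τ : A5 →* (V →ₗ[ℂ] V), (∀ n : N, V.ρ n = τ (e n p.1)) ∧
      (∀ g, LinearMap.trace ℂ V (τ g) = chi (r p.2) g) ∧ ∀ g, chi (r p.2) g⁻¹ = chi (r p.2) g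
  have hbase : ∀ p, ∃ χ₀ : G → ℂ, ∀ χ, P p χ → ∃ l ∈ L, χ = l * χ₀ := by
    intro p
    by_cases hp : ∃ χ₀, P p χ₀
    · obtain ⟨χ₀, V, hV, hχ, ht, τ, h1, h2, h3⟩ := hp
      refine ⟨χ₀, ?_⟩
      rintro χ ⟨W, hW, hχ', -, τ', h1', h2', -⟩
      obtain ⟨l, hl⟩ := main_twist N e V W hV p.1 (r p.2) ht τ τ' h1 h1' h2 h2' h3
      refine ⟨fun g => l g, linear_char G l, ?_⟩
      rw [hχ, hχ']
      exact funext hl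
    · exact ⟨0, fun χ h => absurd ⟨χ, h⟩ hp⟩
  choose χ₀ hχ₀ using hbase
  have hsub : ({χ ∈ IrrChar G | charDeg χ = 3 ∧ ∃ n ∈ N, χ n ≠ χ 1} : Set (G → ℂ)) ⊆
      (fun x : (Fin k × Bool) × (G → ℂ) => x.2 * χ₀ x.1) '' (Set.univ ×ˢ L) := by
    rintro χ ⟨⟨V, -, rfl⟩, hd, n, hn, hne⟩
    rw [charDeg_eq] at hd
    obtain ⟨i, t, τ, ht, h1, h2, h3⟩ := restrict_data e hd (V.ρ.comp N.subtype) ⟨⟨n, hn⟩, by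
      intro h
      apply hne
      have h' : V.ρ n = 1 := h
      simp only [FDRep.character, h', map_one]⟩
    obtain ⟨b, rfl⟩ := hr t ht
    obtain ⟨l, hl, hle⟩ := hχ₀ (i, b) _ ⟨V, hd, rfl, ht, τ, h1, h2, h3⟩
    exact ⟨((i, b), l), ⟨trivial, hl⟩, hle.symm⟩
  have hfin : ((Set.univ : Set (Fin k × Bool)) ×ˢ L).Finite := Set.finite_univ.prod hLf
  calc _ ≤ _ := Set.ncard_le_ncard hsub (hfin.image _)
    _ ≤ _ := Set.ncard_image_le hfin
    _ = 2 * k * L.ncard := by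
      rw [Set.ncard_prod, Set.ncard_univ]
      simp [mul_comm]
end

section
/- Let G be a finite group which is a central product G = MC, where M ≅ SL(2,5), C is a subgroup commuting elementwise with M, and M ∩ C = Z(M) (the center of M, of order 2).reach Then the average of the degrees of the irreducible complex characters of G is at least 16/5. -/
open CategoryTheory

section CharTheory

open Representation Module

/-- `χ` is the character of a finite-dimensional complex representation. -/
def IsCh {H : Type} [Group H] (χ : H → ℂ) : Prop :=
  ∃ (V : Type) (_ : AddCommGroup V) (_ : Module ℂ V) (_ : FiniteDimensional ℂ V)
    (ρ : Representation ℂ H V), χ = ρ.character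

theorem mem_irr_iff {H : Type} [Group H] [Fintype H] (χ : H → ℂ) :
    χ ∈ IrrChar H ↔ IsCh χ ∧ ∑ g : H, χ g * χ g⁻¹ = Nat.card H := by
  constructor
  · rintro ⟨V, hV, rfl⟩
    refine ⟨⟨V, inferInstance, inferInstance, inferInstance, V.ρ, rfl⟩, ?_⟩
    exact (FDRep.simple_iff_char_is_norm_one V).1 hV
  · rintro ⟨⟨V, _, _, _, ρ, rfl⟩, h⟩
    exact ⟨FDRep.of ρ, (FDRep.simple_iff_char_is_norm_one _).2 h, rfl⟩

theorem irr_ortho {H : Type} [Group H] [Fintype H] {χ ψ : H → ℂ}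
    (hχ : χ ∈ IrrChar H) (hψ : ψ ∈ IrrChar H) (hne : χ ≠ ψ) :
    ∑ g : H, χ g * ψ g⁻¹ = 0 := by
  obtain ⟨V, hV, rfl⟩ := hχ
  obtain ⟨W, hW, rfl⟩ := hψ
  have hc : (Nat.card H : ℂ) ≠ 0 := by exact_mod_cast Nat.card_pos.ne'
  have := invertibleOfNonzero hc
  have h := FDRep.char_orthonormal V W
  rw [if_neg] at h
  · simpa [hc] using h
  · rintro ⟨i⟩
    exact hne (FDRep.char_iso i)

theorem irr_norm {H : Type} [Group H] [Fintype H] {χ : H → ℂ}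
    (hχ : χ ∈ IrrChar H) : ∑ g : H, χ g * χ g⁻¹ = Nat.card H :=
  ((mem_irr_iff χ).1 hχ).2

/-- Every representation's character is a sum of irreducible characters. -/
theorem exists_decomp {H : Type} [Group H] [Fintype H] (n : ℕ) :
    ∀ (V : Type) [AddCommGroup V] [Module ℂ V] [FiniteDimensional ℂ V]
      (ρ : Representation ℂ H V), finrank ℂ V = n →
      ∃ s : Multiset (H → ℂ), (∀ χ ∈ s, χ ∈ IrrChar H) ∧ ρ.character = s.sum := by
  have hc : (Nat.card H : ℂ) ≠ 0 := by exact_mod_cast Nat.card_pos.ne'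
  have := invertibleOfNonzero hc
  have hz : NeZero (Nat.card H : ℂ) := ⟨hc⟩
  induction n using Nat.strong_induction_on with
  | _ n ih =>
  intro V _ _ _ ρ hn
  by_cases hirr : IsIrreducible ρ
  · refine ⟨{ρ.character}, ?_, by simp⟩
    intro χ hχ
    rw [Multiset.mem_singleton] at hχ
    subst hχ
    refine (mem_irr_iff _).2 ⟨⟨V, _, _, inferInstance, ρ, rfl⟩, ?_⟩
    have h := card_inv_mul_sum_char_mul_char_eq_finrank ρ ρ
    rw [IsIrreducible.finrank_intertwiningMap_self] at h
    field_simp at h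
    simpa using h
  · by_cases hV : Subsingleton V
    · refine ⟨0, by simp, ?_⟩
      ext g
      have : ρ g = 0 := Subsingleton.elim _ _
      simp [character, this]
    · rw [not_subsingleton_iff_nontrivial] at hV
      have hnt : Nontrivial (Subrepresentation ρ) := by
        refine ⟨⊥, ⊤, fun h => ?_⟩
        have := congrArg Subrepresentation.toSubmodule h
        exact bot_ne_top (α := Submodule ℂ V) this
      have : ∃ W : Subrepresentation ρ, W ≠ ⊥ ∧ W ≠ ⊤ := by
        by_contra hcon
        push Not at hcon
        exact hirr ⟨fun W => or_iff_not_imp_left.2 (hcon W)⟩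
      obtain ⟨W, hW0, hW1⟩ := this
      obtain ⟨W', hWW'⟩ := exists_isCompl W
      have hc' : IsCompl W.toSubmodule W'.toSubmodule := by
        rw [isCompl_iff, disjoint_iff, codisjoint_iff]
        constructor
        · rw [← Subrepresentation.toSubmodule_inf, hWW'.inf_eq_bot]; rfl
        · rw [← Subrepresentation.toSubmodule_sup, hWW'.sup_eq_top]; rfl
      have hW0' : W.toSubmodule ≠ ⊥ := fun h => hW0 (Subrepresentation.toSubmodule_injective h)
      have hW1' : W.toSubmodule ≠ ⊤ := fun h => hW1 (Subrepresentation.toSubmodule_injective h)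
      have hadd := Submodule.finrank_add_eq_of_isCompl hc'
      have h1 : 0 < finrank ℂ W.toSubmodule := by
        rw [Module.finrank_pos_iff]
        exact Submodule.nontrivial_iff_ne_bot.2 hW0'
      have h2 : finrank ℂ W.toSubmodule < finrank ℂ V :=
        Submodule.finrank_lt hW1'
      obtain ⟨s, hs, hs'⟩ := ih _ (by omega) W.toSubmodule W.toRepresentation rfl
      obtain ⟨t, ht, ht'⟩ := ih (finrank ℂ W'.toSubmodule) (by omega) W'.toSubmodule W'.toRepresentation rfl
      refine ⟨s + t, ?_, ?_⟩
      · intro χ hχ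
        rcases Multiset.mem_add.1 hχ with h | h
        · exact hs _ h
        · exact ht _ h
      · rw [Multiset.sum_add, ← hs', ← ht']
        ext g
        let e := Submodule.prodEquivOfIsCompl _ _ hc'
        have key : ρ g = e.conj (LinearMap.prodMap (W.toRepresentation g) (W'.toRepresentation g)) := by
          rw [LinearEquiv.conj_apply]
          rw [LinearEquiv.eq_comp_toLinearMap_symm]
          apply LinearMap.ext
          rintro ⟨x, y⟩
          simp [e, Subrepresentation.toRepresentation]
        simp only [Pi.add_apply, character]
        rw [key, LinearMap.trace_conj', LinearMap.trace_prodMap']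

theorem irr_linInd {H : Type} [Group H] [Fintype H] (S : Finset (H → ℂ))
    (hS : ∀ χ ∈ S, χ ∈ IrrChar H) (c : (H → ℂ) → ℂ)
    (h : ∀ g, ∑ χ ∈ S, c χ * χ g = 0) : ∀ ψ ∈ S, c ψ = 0 := by
  intro ψ hψ
  have hc : (Nat.card H : ℂ) ≠ 0 := by exact_mod_cast Nat.card_pos.ne'
  have h1 : ∑ g, (∑ χ ∈ S, c χ * χ g) * ψ g⁻¹ = 0 := by simp [h]
  have h2 : ∑ g, (∑ χ ∈ S, c χ * χ g) * ψ g⁻¹ = ∑ χ ∈ S, c χ * ∑ g, χ g * ψ g⁻¹ := by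
    simp_rw [Finset.sum_mul, Finset.mul_sum]
    rw [Finset.sum_comm]
    simp_rw [mul_assoc]
  rw [h2, Finset.sum_eq_single ψ, irr_norm (hS _ hψ)] at h1
  · simpa [hc] using h1
  · intro χ hχ hne
    rw [irr_ortho (hS _ hχ) (hS _ hψ) hne, mul_zero]
  · exact fun h => absurd hψ h

/-- Bound on the number of characters in terms of representatives. -/
theorem irr_card_le {H : Type} [Group H] [Fintype H] (S : Finset (H → ℂ))
    (hS : ∀ χ ∈ S, χ ∈ IrrChar H) (n : ℕ) (r : Fin n → H)
    (hr : ∀ g, ∃ i, ∃ s : ℂ, ∀ χ ∈ S, χ g = s * χ (r i)) : S.card ≤ n := by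
  have hli : LinearIndependent ℂ (fun (χ : S) (i : Fin n) => χ.1 (r i)) := by
    rw [Fintype.linearIndependent_iff]
    intro c hc
    classical
    let c' : (H → ℂ) → ℂ := fun χ => if h : χ ∈ S then c ⟨χ, h⟩ else 0
    have hc' : ∀ χ : S, c' χ.1 = c χ := fun χ => by simp [c']
    have := irr_linInd S hS c' (by
      intro g
      obtain ⟨i, s, hs⟩ := hr g
      have h1 := congrFun hc i
      simp only [Finset.sum_apply, Pi.smul_apply, smul_eq_mul, Pi.zero_apply] at h1
      have h2 : ∑ χ ∈ S, c' χ * χ (r i) = 0 := by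
        rw [← Finset.sum_coe_sort S (fun χ => c' χ * χ (r i))]
        simpa [hc'] using h1
      calc _ = ∑ χ ∈ S, s * (c' χ * χ (r i)) :=
            Finset.sum_congr rfl (fun χ hχ => by rw [hs χ hχ]; ring)
        _ = 0 := by rw [← Finset.mul_sum, h2, mul_zero])
    intro χ
    rw [← hc']
    exact this _ χ.2
  simpa using hli.fintype_card_le_finrank

theorem irr_finite (H : Type) [Group H] [Fintype H] : (IrrChar H).Finite := by
  by_contra hinf
  obtain ⟨S, hS, hcard⟩ := Set.Infinite.exists_subset_card_eq hinf (Fintype.card H + 1)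
  have := irr_card_le S hS (Fintype.card H) (Fintype.equivFin H).symm
    (fun g => ⟨Fintype.equivFin H g, 1, fun χ _ => by simp⟩)
  omega

/-- The finset of irreducible characters. -/
noncomputable def irr (H : Type) [Group H] [Fintype H] : Finset (H → ℂ) :=
  (irr_finite H).toFinset

theorem mem_irr {H : Type} [Group H] [Fintype H] {χ : H → ℂ} : χ ∈ irr H ↔ χ ∈ IrrChar H := by
  simp [irr]

open Classical in
theorem isCh_expand {H : Type} [Group H] [Fintype H] {θ : H → ℂ} (hθ : IsCh θ) (g : H) :
    (Nat.card H : ℂ) * θ g = ∑ χ ∈ irr H, (∑ x, θ x * χ x⁻¹) * χ g := by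
  obtain ⟨V, _, _, _, ρ, rfl⟩ := hθ
  obtain ⟨s, hs, hs'⟩ := exists_decomp (H := H) _ V ρ rfl
  rw [hs']
  clear hs'
  induction s using Multiset.induction_on with
  | empty => simp
  | cons ψ s ih =>
    have hψ : ψ ∈ irr H := mem_irr.2 (hs ψ (by simp))
    have := ih (fun χ hχ => hs χ (by simp [hχ]))
    simp only [Multiset.sum_cons, Pi.add_apply, add_mul, mul_add, Finset.sum_add_distrib, this]
    congr 1
    rw [Finset.sum_eq_single ψ, irr_norm (mem_irr.1 hψ)]
    · intro χ hχ hne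
      rw [irr_ortho (mem_irr.1 hψ) (mem_irr.1 hχ) hne.symm, zero_mul]
    · exact fun h => absurd hψ h

open Classical in
theorem isCh_reg (H : Type) [Group H] [Fintype H] :
    IsCh (fun g : H => if g = 1 then (Nat.card H : ℂ) else 0) := by
  refine ⟨H → ℂ, inferInstance, inferInstance, inferInstance,
    { toFun := fun g => LinearMap.funLeft ℂ ℂ (fun x => x * g)
      map_one' := by ext; simp
      map_mul' := fun a b => by ext; simp [mul_assoc, LinearMap.funLeft] }, ?_⟩
  ext g
  rw [character, LinearMap.trace_eq_matrix_trace ℂ (Pi.basisFun ℂ H)]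
  simp [Matrix.trace, LinearMap.funLeft, Pi.single_apply]

open Classical in
theorem irr_reg {H : Type} [Group H] [Fintype H] (g : H) :
    ∑ χ ∈ irr H, χ 1 * χ g = if g = 1 then (Nat.card H : ℂ) else 0 := by
  have hc : (Nat.card H : ℂ) ≠ 0 := by exact_mod_cast Nat.card_pos.ne'
  have h := isCh_expand (isCh_reg H) g
  simp only [ite_mul, zero_mul, Finset.sum_ite_eq', Finset.mem_univ, if_true, inv_one] at h
  simp_rw [mul_assoc] at h
  rw [← Finset.mul_sum] at h
  exact (mul_left_cancel₀ hc h).symm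

end CharTheory

section CharTheory2

open Representation Module

theorem irr_schur {H : Type} [Group H] [Fintype H] {V : Type} [AddCommGroup V] [Module ℂ V]
    [FiniteDimensional ℂ V] (ρ : Representation ℂ H V) (hρ : ρ.character ∈ IrrChar H)
    (z : H) (hz : ∀ g, z * g = g * z) (hz2 : z * z = 1) :
    ∃ ε : ℂ, (ε = 1 ∨ ε = -1) ∧ ρ z = ε • 1 := by
  have hc : (Nat.card H : ℂ) ≠ 0 := by exact_mod_cast Nat.card_pos.ne'
  have := invertibleOfNonzero hc
  have h := card_inv_mul_sum_char_mul_char_eq_finrank ρ ρ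
  rw [irr_norm hρ, inv_mul_cancel₀ hc] at h
  have h1 : finrank ℂ (IntertwiningMap ρ ρ) = 1 := by exact_mod_cast h.symm
  have hnt : Nontrivial V := by
    by_contra hV
    rw [not_nontrivial_iff_subsingleton] at hV
    have : Subsingleton (IntertwiningMap ρ ρ) :=
      ⟨fun f g => by ext x; exact Subsingleton.elim _ _⟩
    rw [finrank_zero_of_subsingleton] at h1
    omega
  have hid : (IntertwiningMap.id ρ) ≠ 0 := by
    intro h0
    obtain ⟨x, hx⟩ := exists_ne (0 : V)
    have := congrArg (fun f : IntertwiningMap ρ ρ => f x) h0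
    exact hx (by simpa using this)
  obtain ⟨ε, hε⟩ := (finrank_eq_one_iff_of_nonzero' _ hid).mp h1
    ⟨ρ z, fun g => by
      rw [← End.mul_eq_comp, ← End.mul_eq_comp, ← map_mul, ← map_mul, hz]⟩
  have hε' : ρ z = ε • 1 := by
    ext x
    have := congrArg (fun f : IntertwiningMap ρ ρ => f x) hε
    exact this.symm
  refine ⟨ε, ?_, hε'⟩
  have h2 : ρ (z * z) = 1 := by rw [hz2, map_one]
  rw [map_mul, hε'] at h2
  obtain ⟨x, hx⟩ := exists_ne (0 : V)
  have h3 := congrArg (fun f : V →ₗ[ℂ] V => f x) h2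
  simp only [smul_mul_smul_comm, mul_one, LinearMap.smul_apply, End.one_apply] at h3
  have h4 : (ε * ε - 1) • x = 0 := by rw [sub_smul, h3, one_smul, sub_self]
  have h5 := (smul_eq_zero.1 h4).resolve_right hx
  have h6 : (ε - 1) * (ε + 1) = 0 := by linear_combination h5
  rcases mul_eq_zero.1 h6 with h | h
  · left; linear_combination h
  · right; linear_combination h

theorem irr_one_pos {H : Type} [Group H] [Fintype H] {χ : H → ℂ} (hχ : χ ∈ IrrChar H) :
    ∃ n : ℕ, 0 < n ∧ χ 1 = n := by
  obtain ⟨⟨V, _, _, _, ρ, rfl⟩, h⟩ := (mem_irr_iff χ).1 hχ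
  refine ⟨finrank ℂ V, ?_, by simp⟩
  by_contra h0
  have : Subsingleton V := by
    rw [← finrank_zero_iff (R := ℂ)]; omega
  have h1 : ∀ g, ρ.character g = 0 := fun g => by
    have : ρ g = 0 := Subsingleton.elim _ _
    simp [character, this]
  simp only [h1, mul_zero, Finset.sum_const_zero] at h
  exact Nat.card_pos.ne' (by exact_mod_cast h.symm : Nat.card H = 0)

theorem charDeg_eq_s10 {H : Type} [Group H] {χ : H → ℂ} {n : ℕ} (h : χ 1 = n) : charDeg χ = n := by
  simp [charDeg, h]

theorem irr_charDeg {H : Type} [Group H] [Fintype H] {χ : H → ℂ} (hχ : χ ∈ IrrChar H) :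
    χ 1 = charDeg χ := by
  obtain ⟨n, _, h⟩ := irr_one_pos hχ
  rw [charDeg_eq_s10 h, h]

theorem irr_charDeg_pos {H : Type} [Group H] [Fintype H] {χ : H → ℂ} (hχ : χ ∈ IrrChar H) :
    0 < charDeg χ := by
  obtain ⟨n, hn, h⟩ := irr_one_pos hχ
  rwa [charDeg_eq_s10 h]

/-- Central involutions act by a sign. -/
theorem irr_sign {H : Type} [Group H] [Fintype H] {χ : H → ℂ} (hχ : χ ∈ IrrChar H)
    (z : H) (hz : ∀ g, z * g = g * z) (hz2 : z * z = 1) :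
    (∀ g, χ (z * g) = χ g) ∨ (∀ g, χ (z * g) = - χ g) := by
  obtain ⟨⟨V, _, _, _, ρ, rfl⟩, -⟩ := (mem_irr_iff χ).1 hχ
  obtain ⟨ε, h, hact⟩ := irr_schur ρ hχ z hz hz2
  rcases h with rfl | rfl
  · left; intro g; simp [character, hact]
  · right; intro g; simp [character, hact]

/-- External product of characters. -/
theorem isCh_prod {A B : Type} [Group A] [Group B] {α : A → ℂ} {β : B → ℂ}
    (hα : IsCh α) (hβ : IsCh β) : IsCh (fun x : A × B => α x.1 * β x.2) := by
  obtain ⟨V, _, _, _, ρ, rfl⟩ := hα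
  obtain ⟨W, _, _, _, σ, rfl⟩ := hβ
  let ρ' : Representation ℂ (A × B) V := ρ.comp (MonoidHom.fst A B)
  let σ' : Representation ℂ (A × B) W := σ.comp (MonoidHom.snd A B)
  refine ⟨TensorProduct ℂ V W, inferInstance, inferInstance, inferInstance, tprod ρ' σ', ?_⟩
  rw [char_tensor]
  rfl

theorem irr_prod {A B : Type} [Group A] [Group B] [Fintype A] [Fintype B]
    {α : A → ℂ} {β : B → ℂ} (hα : α ∈ IrrChar A) (hβ : β ∈ IrrChar B) :
    (fun x : A × B => α x.1 * β x.2) ∈ IrrChar (A × B) := by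
  rw [mem_irr_iff] at *
  refine ⟨isCh_prod hα.1 hβ.1, ?_⟩
  rw [Nat.card_prod, Nat.cast_mul, ← hα.2, ← hβ.2, Finset.sum_mul_sum, Fintype.sum_prod_type]
  refine Finset.sum_congr rfl fun a _ => Finset.sum_congr rfl fun b _ => ?_
  simp only [Prod.inv_mk]
  ring

theorem irr_prod_exists {A B : Type} [Group A] [Group B] [Fintype A] [Fintype B]
    {χ : A × B → ℂ} (hχ : χ ∈ IrrChar (A × B)) :
    ∃ α ∈ irr A, ∃ β ∈ irr B, χ = fun x => α x.1 * β x.2 := by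
  classical
  by_contra hcon
  push Not at hcon
  have h0 : ∀ α ∈ irr A, ∀ β ∈ irr B, ∑ x : A × B, χ x * (α x⁻¹.1 * β x⁻¹.2) = 0 :=
    fun α hα β hβ =>
      irr_ortho hχ (irr_prod (mem_irr.1 hα) (mem_irr.1 hβ)) (hcon α hα β hβ)
  have h1 : ∑ α ∈ irr A, ∑ β ∈ irr B, α 1 * β 1 * ∑ x : A × B, χ x * (α x⁻¹.1 * β x⁻¹.2) = 0 :=
    Finset.sum_eq_zero fun α hα => Finset.sum_eq_zero fun β hβ => by rw [h0 α hα β hβ, mul_zero]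
  have h2 : ∑ α ∈ irr A, ∑ β ∈ irr B, α 1 * β 1 * ∑ x : A × B, χ x * (α x⁻¹.1 * β x⁻¹.2)
      = ∑ x : A × B, χ x * ((∑ α ∈ irr A, α 1 * α x⁻¹.1) * (∑ β ∈ irr B, β 1 * β x⁻¹.2)) := by
    simp_rw [Finset.sum_mul_sum, Finset.mul_sum]
    rw [Finset.sum_comm (s := Finset.univ) (t := irr A)]
    refine Finset.sum_congr rfl fun α _ => ?_
    rw [Finset.sum_comm (s := Finset.univ) (t := irr B)]
    refine Finset.sum_congr rfl fun β _ => Finset.sum_congr rfl fun x _ => ?_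
    ring
  rw [h2] at h1
  simp_rw [irr_reg] at h1
  rw [Finset.sum_eq_single 1] at h1
  · obtain ⟨n, hn, hn'⟩ := irr_one_pos hχ
    simp [hn', hn.ne'] at h1
  · intro x _ hx
    by_cases h : x⁻¹.1 = 1
    · have : x⁻¹.2 ≠ 1 := fun h' => hx (inv_eq_one.1 (Prod.ext h h'))
      rw [if_neg this, mul_zero, mul_zero]
    · rw [if_neg h, zero_mul, mul_zero]
  · simp

theorem sum_surj {K G : Type} [Group K] [Group G] [Fintype K] [Fintype G] (π : K →* G)
    (hπ : Function.Surjective π) :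
    ∃ N : ℂ, N ≠ 0 ∧ (∀ f : G → ℂ, ∑ k, f (π k) = N * ∑ g, f g) ∧
      (Nat.card K : ℂ) = N * Nat.card G := by
  classical
  have hmain : ∀ f : G → ℂ, ∑ k, f (π k) = (Nat.card π.ker : ℂ) * ∑ g, f g := by
    intro f
    have : ∀ g, (Finset.univ.filter (fun k => π k = g)).card = Nat.card π.ker := by
      intro g
      obtain ⟨k₀, hk₀⟩ := hπ g
      rw [← Fintype.card_subtype, ← Nat.card_eq_fintype_card]
      refine Nat.card_congr
        { toFun := fun k => ⟨k₀⁻¹ * k.1, by simp [MonoidHom.mem_ker, k.2, hk₀]⟩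
          invFun := fun k => ⟨k₀ * k.1, by have := k.2; rw [MonoidHom.mem_ker] at this; simp [this, hk₀]⟩
          left_inv := fun k => by simp
          right_inv := fun k => by simp }
    rw [← Finset.sum_fiberwise_of_maps_to (s := Finset.univ) (t := Finset.univ) (g := π) (by simp),
      Finset.mul_sum]
    refine Finset.sum_congr rfl fun g _ => ?_
    rw [Finset.sum_congr rfl (g := fun _ => f g)
      (fun k hk => by rw [(Finset.mem_filter.1 hk).2]), Finset.sum_const, this, nsmul_eq_mul]
  refine ⟨Nat.card π.ker, by exact_mod_cast Nat.card_pos.ne', hmain, ?_⟩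
  have := hmain (fun _ => 1)
  simpa using this

theorem irr_pullback {K G : Type} [Group K] [Group G] [Fintype K] [Fintype G] (π : K →* G)
    (hπ : Function.Surjective π) {χ : G → ℂ} (hχ : χ ∈ IrrChar G) :
    (fun k => χ (π k)) ∈ IrrChar K := by
  rw [mem_irr_iff] at *
  obtain ⟨⟨V, _, _, _, ρ, rfl⟩, h⟩ := hχ
  refine ⟨⟨V, _, _, inferInstance, ρ.comp π, rfl⟩, ?_⟩
  obtain ⟨N, hN, h1, h2⟩ := sum_surj π hπ
  simp_rw [map_inv]
  rw [h1 (fun g => ρ.character g * ρ.character g⁻¹), h, h2]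

theorem irr_descend {K G : Type} [Group K] [Group G] [Fintype K] [Fintype G] (π : K →* G)
    (hπ : Function.Surjective π) {V : Type} [AddCommGroup V] [Module ℂ V] [FiniteDimensional ℂ V]
    (ρ : Representation ℂ K V) (hρ : ρ.character ∈ IrrChar K) (hker : ∀ k ∈ π.ker, ρ k = 1) :
    ∃ χ ∈ IrrChar G, ∀ k, χ (π k) = ρ.character k := by
  let φ : K ⧸ π.ker →* (V →ₗ[ℂ] V) := QuotientGroup.lift π.ker ρ hker
  let e := QuotientGroup.quotientKerEquivOfSurjective π hπ
  let ρ' : Representation ℂ G V := φ.comp e.symm.toMonoidHom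
  have hk : ∀ k, ρ' (π k) = ρ k := by
    intro k
    have : e.symm (π k) = QuotientGroup.mk k := by
      rw [MulEquiv.symm_apply_eq]; rfl
    simp only [ρ', MonoidHom.comp_apply, MulEquiv.toMonoidHom_eq_coe, MonoidHom.coe_coe, this]
    rfl
  have hk' : ∀ k, ρ'.character (π k) = ρ.character k := fun k => by simp [character, hk]
  refine ⟨ρ'.character, (mem_irr_iff _).2 ⟨⟨V, _, _, inferInstance, ρ', rfl⟩, ?_⟩, hk'⟩
  obtain ⟨N, hN, h1, h2⟩ := sum_surj π hπ
  have h3 := irr_norm hρ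
  rw [h2] at h3
  have h4 := h1 (fun g => ρ'.character g * ρ'.character g⁻¹)
  simp_rw [← map_inv, hk'] at h4
  rw [h3] at h4
  exact (mul_left_cancel₀ hN h4).symm

end CharTheory2

section SLFacts

/-- Conjugacy of 2×2 matrices, in coordinates. -/
def conjR (a b c d p q r s : ZMod 5) : Prop :=
  ∃ x y z w : ZMod 5, x * w - y * z = 1 ∧ x * a + y * c = p * x + q * z ∧
    x * b + y * d = p * y + q * w ∧ z * a + w * c = r * x + s * z ∧ z * b + w * d = r * y + s * w

instance (a b c d p q r s : ZMod 5) : Decidable (conjR a b c d p q r s) := by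
  unfold conjR; infer_instance

theorem conj0 : ∀ a b c : ZMod 5, a * (0 - a) - b * c = 1 → conjR a b c (0 - a) 0 1 (-1) 0 := by
  decide +kernel

theorem conj1 : ∀ a b c : ZMod 5, a * (1 - a) - b * c = 1 → conjR a b c (1 - a) 0 (-1) 1 1 := by
  decide +kernel

theorem conj2 : ∀ a b c : ZMod 5, a * (2 - a) - b * c = 1 → conjR a b c (2 - a) 1 0 0 1 ∨
    conjR a b c (2 - a) 1 1 0 1 ∨ conjR a b c (2 - a) 1 2 0 1 := by
  decide +kernel

abbrev SL5 := Matrix.SpecialLinearGroup (Fin 2) (ZMod 5)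

/-- Matrix with given entries. -/
def mk4 (a b c d : ZMod 5) (h : a * d - b * c = 1) : SL5 :=
  ⟨!![a, b; c, d], by rwa [Matrix.det_fin_two_of]⟩

theorem mk4_surj (g : SL5) : ∃ a b c d h, g = mk4 a b c d h := by
  induction g using Matrix.SpecialLinearGroup.fin_two_induction with
  | h a b c d h => exact ⟨a, b, c, d, h, rfl⟩

theorem mk4_val (a b c d h) : (mk4 a b c d h).1 = !![a, b; c, d] := rfl

theorem sl_val_mul (g k : SL5) : (g * k).1 = g.1 * k.1 := rfl

theorem sl_val_neg (g : SL5) : (-g).1 = -g.1 := rfl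

theorem mk4_neg (a b c d h h') : - mk4 a b c d h = mk4 (-a) (-b) (-c) (-d) h' := by
  apply Subtype.ext
  rw [sl_val_neg, mk4_val, mk4_val]
  simp

theorem conj_of_conjR {a b c d p q r s : ZMod 5} (h : a * d - b * c = 1) (h' : p * s - q * r = 1)
    (hR : conjR a b c d p q r s) : ∃ k : SL5, k * mk4 a b c d h = mk4 p q r s h' * k := by
  obtain ⟨x, y, z, w, h0, h1, h2, h3, h4⟩ := hR
  refine ⟨mk4 x y z w h0, ?_⟩
  apply Subtype.ext
  simp only [mk4_val, sl_val_mul, Matrix.mul_fin_two, h1, h2, h3, h4]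

/-- Representatives of classes of SL(2,5) up to sign. -/
def rep5 : Fin 5 → SL5 :=
  ![mk4 0 1 (-1) 0 (by decide), 1, mk4 0 (-1) 1 1 (by decide), mk4 1 1 0 1 (by decide),
    mk4 1 2 0 1 (by decide)]

theorem mk4_one : mk4 1 0 0 1 (by decide) = 1 := by decide

theorem sl_conj (g : SL5) : ∃ i, ∃ k : SL5, k * g = rep5 i * k ∨ k * (-g) = rep5 i * k := by
  have key : ∀ a b c d h, (a + d = 0 ∨ a + d = 1 ∨ a + d = 2) →
      ∃ i, ∃ k : SL5, k * mk4 a b c d h = rep5 i * k := by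
    rintro a b c d h (h' | h' | h')
    · obtain rfl : d = 0 - a := by linear_combination h'
      obtain ⟨k, hk⟩ := conj_of_conjR h (by decide) (conj0 a b c h)
      exact ⟨0, k, hk⟩
    · obtain rfl : d = 1 - a := by linear_combination h'
      obtain ⟨k, hk⟩ := conj_of_conjR h (by decide) (conj1 a b c h)
      exact ⟨2, k, hk⟩
    · obtain rfl : d = 2 - a := by linear_combination h'
      rcases conj2 a b c h with h1 | h1 | h1
      · obtain ⟨k, hk⟩ := conj_of_conjR h (by decide) h1
        rw [mk4_one] at hk
        exact ⟨1, k, hk⟩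
      · obtain ⟨k, hk⟩ := conj_of_conjR h (by decide) h1
        exact ⟨3, k, hk⟩
      · obtain ⟨k, hk⟩ := conj_of_conjR h (by decide) h1
        exact ⟨4, k, hk⟩
  obtain ⟨a, b, c, d, h, rfl⟩ := mk4_surj g
  have ht : ∀ t : ZMod 5, (t = 0 ∨ t = 1 ∨ t = 2) ∨ (-t = 0 ∨ -t = 1 ∨ -t = 2) := by decide
  rcases ht (a + d) with h1 | h1
  · obtain ⟨i, k, hk⟩ := key a b c d h h1
    exact ⟨i, k, Or.inl hk⟩
  · obtain ⟨i, k, hk⟩ := key (-a) (-b) (-c) (-d) (by linear_combination h)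
      (by rwa [neg_add] at h1)
    refine ⟨i, k, Or.inr ?_⟩
    rw [mk4_neg]
    exact hk

theorem rep0_neg : ∃ k : SL5, k * rep5 0 = (- rep5 0) * k :=
  ⟨mk4 0 2 2 0 (by decide), by decide⟩

theorem hom_comm_one (f : SL5 →* ℂ) {a b r : SL5} (h : a * b = r * (b * a)) : f r = 1 := by
  have h1 := congrArg f h
  simp only [map_mul] at h1
  have hne : ∀ x, f x ≠ 0 := fun x h0 => by
    have : f (x * x⁻¹) = 0 := by rw [map_mul, h0, zero_mul]
    simp at this
  have h2 : (f r - 1) * (f b * f a) = 0 := by linear_combination -h1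
  have := (mul_eq_zero.1 h2).resolve_right (mul_ne_zero (hne _) (hne _))
  linear_combination this

theorem sl_perfect (f : SL5 →* ℂ) (g : SL5) : f g = 1 := by
  have hne : ∀ x, f x ≠ 0 := fun x h0 => by
    have : f (x * x⁻¹) = 0 := by rw [map_mul, h0, zero_mul]
    simp at this
  have hm : f (-1) = 1 := hom_comm_one f (a := mk4 0 1 4 0 (by decide))
    (b := mk4 0 2 2 0 (by decide)) (by decide)
  have hr : ∀ i, f (rep5 i) = 1 := by
    intro i
    fin_cases i
    · exact hom_comm_one f (a := mk4 0 2 2 0 (by decide))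
        (b := mk4 1 4 3 3 (by decide)) (by decide)
    · exact map_one f
    · exact hom_comm_one f (a := mk4 0 1 4 3 (by decide))
        (b := mk4 0 2 2 2 (by decide)) (by decide)
    · exact hom_comm_one f (a := mk4 1 3 0 1 (by decide))
        (b := mk4 2 0 0 3 (by decide)) (by decide)
    · exact hom_comm_one f (a := mk4 1 1 0 1 (by decide))
        (b := mk4 2 0 0 3 (by decide)) (by decide)
  obtain ⟨i, k, h | h⟩ := sl_conj g
  · have h1 := congrArg f h
    rw [map_mul, map_mul, hr, one_mul] at h1
    exact mul_left_cancel₀ (hne k) (by rw [h1, mul_one])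
  · have h1 := congrArg f h
    rw [← neg_one_mul, map_mul, map_mul, map_mul, hr, one_mul, hm, one_mul] at h1
    exact mul_left_cancel₀ (hne k) (by rw [h1, mul_one])

theorem sl_center (g : SL5) (hg : ∀ x, g * x = x * g) : g = 1 ∨ g = -1 := by
  obtain ⟨a, b, c, d, h, rfl⟩ := mk4_surj g
  have h1 := congrArg Subtype.val (hg (mk4 1 1 0 1 (by decide)))
  have h2 := congrArg Subtype.val (hg (mk4 1 0 1 1 (by decide)))
  simp only [mk4_val, sl_val_mul, Matrix.mul_fin_two] at h1 h2
  have h3 := congrFun (congrFun h1 0) 0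
  have h4 := congrFun (congrFun h1 0) 1
  have h5 := congrFun (congrFun h2 0) 0
  simp at h3 h4 h5
  obtain rfl : d = a := by linear_combination -h4
  subst h3 h5
  have : ∀ d : ZMod 5, d * d - 0 * 0 = 1 → d = 1 ∨ d = -1 := by decide
  rcases this d h with rfl | rfl
  · left; exact mk4_one
  · right; exact (by decide : mk4 (-1) 0 0 (-1) (by decide) = -1)

theorem sl_card : Nat.card SL5 = 120 := by
  let e : SL5 ≃ {x : ZMod 5 × ZMod 5 × ZMod 5 × ZMod 5 // x.1 * x.2.2.2 - x.2.1 * x.2.2.1 = 1} :=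
    { toFun := fun g => ⟨(g.1 0 0, g.1 0 1, g.1 1 0, g.1 1 1), by
        have := g.2; rwa [Matrix.det_fin_two] at this⟩
      invFun := fun x => mk4 _ _ _ _ x.2
      left_inv := fun g => by
        apply Subtype.ext
        simp only [mk4]
        exact (Matrix.eta_fin_two g.1).symm
      right_inv := fun x => by
        apply Subtype.ext
        simp [mk4] }
  rw [Nat.card_congr e, Nat.card_eq_fintype_card]
  decide +kernel

end SLFacts

section MFacts

open Representation Module

theorem irr_trivial (H : Type) [Group H] [Fintype H] : (fun _ => 1 : H → ℂ) ∈ IrrChar H := by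
  rw [mem_irr_iff]
  refine ⟨⟨ℂ, inferInstance, inferInstance, inferInstance, 1, ?_⟩, by simp⟩
  ext g
  simp [character]

theorem irr_conj {H : Type} [Group H] [Fintype H] {χ : H → ℂ} (hχ : χ ∈ IrrChar H) {k g r : H}
    (h : k * g = r * k) : χ g = χ r := by
  obtain ⟨⟨V, _, _, _, ρ, rfl⟩, -⟩ := (mem_irr_iff χ).1 hχ
  have : r = k * g * k⁻¹ := by rw [h]; group
  rw [this, char_conj]

variable {M : Type} [Group M] [Fintype M] (e : M ≃* SL5)

theorem det_one (e : M ≃* SL5) {V : Type} [AddCommGroup V] [Module ℂ V]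
    (ρ : Representation ℂ M V) (g : M) : LinearMap.det (ρ g) = 1 := by
  have := sl_perfect ((LinearMap.det.comp ρ).comp e.symm.toMonoidHom) (e g)
  simpa using this

theorem deg_one (e : M ≃* SL5) {χ : M → ℂ} (hχ : χ ∈ IrrChar M) (h1 : charDeg χ = 1) :
    χ = fun _ => 1 := by
  have hd := irr_charDeg hχ
  obtain ⟨⟨V, _, _, _, ρ, rfl⟩, -⟩ := (mem_irr_iff χ).1 hχ
  rw [h1, char_one] at hd
  have hd : finrank ℂ V = 1 := by exact_mod_cast hd
  ext g
  obtain ⟨c, hc⟩ : ∃ c : ℂ, ρ g = c • 1 := by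
    have h2 : finrank ℂ (V →ₗ[ℂ] V) = 1 := by rw [finrank_linearMap, hd]
    have : Nontrivial V := nontrivial_of_finrank_pos (R := ℂ) (by omega)
    obtain ⟨c, hc⟩ := (finrank_eq_one_iff_of_nonzero' (1 : V →ₗ[ℂ] V) one_ne_zero).1 h2 (ρ g)
    exact ⟨c, hc.symm⟩
  have h3 := det_one e ρ g
  rw [hc, LinearMap.det_smul, hd] at h3
  simp only [pow_one, map_one, mul_one] at h3
  simp [character, hc, h3, hd]

/-- The central involution. -/
def zM : M := e.symm (-1)

theorem zM_comm (g : M) : zM e * g = g * zM e := by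
  apply e.injective; simp [zM]

theorem zM_sq : zM e * zM e = 1 := by
  apply e.injective; simp [zM]

theorem zM_ne : zM e ≠ 1 := by
  intro h
  have := congrArg e h
  simp only [zM, MulEquiv.apply_symm_apply, map_one] at this
  revert this
  decide

theorem odd_even_deg {χ : M → ℂ} (hχ : χ ∈ IrrChar M) (h1 : χ (zM e) ≠ χ 1) :
    Even (charDeg χ) := by
  have hd := irr_charDeg hχ
  obtain ⟨⟨V, _, _, _, ρ, rfl⟩, -⟩ := (mem_irr_iff χ).1 hχ
  obtain ⟨ε, h, h'⟩ := irr_schur ρ hχ (zM e) (zM_comm e) (zM_sq e)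
  rw [char_one] at hd
  have hd : finrank ℂ V = charDeg ρ.character := by exact_mod_cast hd
  rcases h with rfl | rfl
  · exact absurd (by simp [character, h']) h1
  · have h3 := det_one e ρ (zM e)
    rw [h', LinearMap.det_smul, hd] at h3
    simp only [map_one, mul_one] at h3
    by_contra hodd
    rw [Nat.not_even_iff_odd] at hodd
    rw [hodd.neg_one_pow] at h3
    norm_num at h3

open Classical in
/-- Even characters. -/
noncomputable def evM : Finset (M → ℂ) := (irr M).filter (fun χ => χ (zM e) = χ 1)

open Classical in
/-- Odd characters. -/
noncomputable def odM : Finset (M → ℂ) := (irr M).filter (fun χ => ¬ χ (zM e) = χ 1)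

theorem odd_flip {H : Type} [Group H] [Fintype H] {χ : H → ℂ} (hχ : χ ∈ IrrChar H)
    (z : H) (hz : ∀ g, z * g = g * z) (hz2 : z * z = 1) (h : ¬ χ z = χ 1) (g : H) :
    χ (z * g) = - χ g := by
  rcases irr_sign hχ z hz hz2 with h1 | h1
  · exact absurd (by simpa using h1 1) h
  · exact h1 g

theorem even_eq {H : Type} [Group H] [Fintype H] {χ : H → ℂ} (hχ : χ ∈ IrrChar H)
    (z : H) (hz : ∀ g, z * g = g * z) (hz2 : z * z = 1) (h : χ z = χ 1) (g : H) :
    χ (z * g) = χ g := by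
  rcases irr_sign hχ z hz hz2 with h1 | h1
  · exact h1 g
  · exfalso
    have h2 := h1 1
    rw [mul_one, h] at h2
    obtain ⟨n, hn, hn'⟩ := irr_one_pos hχ
    rw [hn'] at h2
    have h3 : (n : ℂ) = 0 := by linear_combination h2 / 2
    have : n = 0 := by exact_mod_cast h3
    omega

theorem M_conj (g : M) : ∃ i, ∃ k : M, k * g = e.symm (rep5 i) * k ∨
    k * (zM e * g) = e.symm (rep5 i) * k := by
  obtain ⟨i, k, h | h⟩ := sl_conj (e g)
  · exact ⟨i, e.symm k, Or.inl (by apply e.injective; simpa using h)⟩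
  · exact ⟨i, e.symm k, Or.inr (by apply e.injective; simpa [zM] using h)⟩

theorem evM_card : (evM e).card ≤ 5 := by
  classical
  refine irr_card_le _ (fun χ hχ => mem_irr.1 (Finset.mem_filter.1 hχ).1) 5
    (fun i => e.symm (rep5 i)) (fun g => ?_)
  obtain ⟨i, k, h⟩ := M_conj e g
  refine ⟨i, 1, fun χ hχ => ?_⟩
  obtain ⟨hχ, hz⟩ := Finset.mem_filter.1 hχ
  rw [mem_irr] at hχ
  rw [one_mul]
  rcases h with h | h
  · exact irr_conj hχ h
  · rw [← irr_conj hχ h, even_eq hχ _ (zM_comm e) (zM_sq e) hz]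

theorem odM_card : (odM e).card ≤ 4 := by
  classical
  refine irr_card_le _ (fun χ hχ => mem_irr.1 (Finset.mem_filter.1 hχ).1) 4
    (fun i => e.symm (rep5 i.succ)) (fun g => ?_)
  have h0 : ∀ χ ∈ odM e, χ (e.symm (rep5 0)) = 0 := by
    intro χ hχ
    obtain ⟨hχ, hz⟩ := Finset.mem_filter.1 hχ
    rw [mem_irr] at hχ
    obtain ⟨k, hk⟩ := rep0_neg
    have h1 : e.symm k * e.symm (rep5 0) = (zM e * e.symm (rep5 0)) * e.symm k := by
      apply e.injective; simpa [zM] using hk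
    have h2 := irr_conj hχ h1
    rw [odd_flip hχ _ (zM_comm e) (zM_sq e) hz] at h2
    linear_combination h2 / 2
  obtain ⟨i, k, h⟩ := M_conj e g
  have hg : (∀ χ ∈ odM e, χ g = χ (e.symm (rep5 i))) ∨
      (∀ χ ∈ odM e, χ g = - χ (e.symm (rep5 i))) := by
    rcases h with h | h
    · left
      intro χ hχ
      exact irr_conj (mem_irr.1 (Finset.mem_filter.1 hχ).1) h
    · right
      intro χ hχ
      obtain ⟨hχ, hz⟩ := Finset.mem_filter.1 hχ
      rw [mem_irr] at hχ
      rw [← irr_conj hχ h, odd_flip hχ _ (zM_comm e) (zM_sq e) hz, neg_neg]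
  induction i using Fin.cases with
  | zero =>
    refine ⟨0, 0, fun χ hχ => ?_⟩
    rcases hg with hg | hg <;> simp [hg χ hχ, h0 χ hχ]
  | succ j =>
    rcases hg with hg | hg
    · exact ⟨j, 1, fun χ hχ => by rw [hg χ hχ, one_mul]⟩
    · exact ⟨j, -1, fun χ hχ => by rw [hg χ hχ, neg_one_mul]⟩

theorem M_squares : (∑ χ ∈ evM e, charDeg χ ^ 2 = 60) ∧ (∑ χ ∈ odM e, charDeg χ ^ 2 = 60) := by
  classical
  have hcard : Nat.card M = 120 := by rw [Nat.card_congr e.toEquiv, sl_card]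
  have h1 := irr_reg (1 : M)
  have h2 := irr_reg (zM e)
  rw [if_pos rfl, hcard] at h1
  rw [if_neg (zM_ne e)] at h2
  rw [← Finset.sum_filter_add_sum_filter_not _ (fun χ : M → ℂ => χ (zM e) = χ 1)] at h1 h2
  have hE : ∑ χ ∈ (irr M).filter (fun χ => χ (zM e) = χ 1), χ 1 * χ (zM e) =
      ∑ χ ∈ (irr M).filter (fun χ => χ (zM e) = χ 1), χ 1 * χ 1 :=
    Finset.sum_congr rfl fun χ hχ => by rw [(Finset.mem_filter.1 hχ).2]
  have hO : ∑ χ ∈ (irr M).filter (fun χ => ¬ χ (zM e) = χ 1), χ 1 * χ (zM e) =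
      - ∑ χ ∈ (irr M).filter (fun χ => ¬ χ (zM e) = χ 1), χ 1 * χ 1 := by
    rw [← Finset.sum_neg_distrib]
    refine Finset.sum_congr rfl fun χ hχ => ?_
    obtain ⟨hχ, hz⟩ := Finset.mem_filter.1 hχ
    have := odd_flip (mem_irr.1 hχ) _ (zM_comm e) (zM_sq e) hz 1
    rw [mul_one] at this
    rw [this]; ring
  rw [hE, hO] at h2
  have hcast : ∀ S : Finset (M → ℂ), S ⊆ irr M →
      ∑ χ ∈ S, χ 1 * χ 1 = ((∑ χ ∈ S, charDeg χ ^ 2 : ℕ) : ℂ) := by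
    intro S hS
    rw [Nat.cast_sum]
    refine Finset.sum_congr rfl fun χ hχ => ?_
    rw [irr_charDeg (mem_irr.1 (hS hχ))]; push_cast; ring
  rw [hcast _ (Finset.filter_subset _ _), hcast _ (Finset.filter_subset _ _)] at h1 h2
  unfold evM odM
  constructor
  · have : ((∑ χ ∈ (irr M).filter (fun χ => χ (zM e) = χ 1), charDeg χ ^ 2 : ℕ) : ℂ)
      = (60 : ℕ) := by push_cast at *; linear_combination (h1 + h2) / 2
    exact_mod_cast this
  · have : ((∑ χ ∈ (irr M).filter (fun χ => ¬ χ (zM e) = χ 1), charDeg χ ^ 2 : ℕ) : ℂ)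
      = (60 : ℕ) := by push_cast at *; linear_combination (h1 - h2) / 2
    exact_mod_cast this

/-- Fibering a sum over degrees. -/
theorem deg_sum {ι : Type} (S : Finset ι) (d : ι → ℕ) (hsq : ∑ i ∈ S, d i ^ 2 = 60)
    (f : ℕ → ℤ) : ∑ i ∈ S, f (d i) =
      ∑ k ∈ Finset.range 8, ((S.filter (fun i => d i = k)).card : ℤ) * f k := by
  have hlt : ∀ i ∈ S, d i ∈ Finset.range 8 := by
    intro i hi
    have h : d i ^ 2 ≤ 60 := by
      rw [← hsq]
      exact Finset.single_le_sum (f := fun i => d i ^ 2) (fun _ _ => Nat.zero_le _) hi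
    rw [Finset.mem_range]
    by_contra hcon
    nlinarith
  rw [← Finset.sum_fiberwise_of_maps_to hlt]
  refine Finset.sum_congr rfl fun k _ => ?_
  rw [Finset.sum_congr rfl (g := fun _ => f k)
    (fun i hi => by rw [(Finset.mem_filter.1 hi).2]), Finset.sum_const, nsmul_eq_mul]

theorem evM_sum : 0 ≤ ∑ χ ∈ evM e, (5 * (charDeg χ : ℤ) - 16) := by
  classical
  have hsq := (M_squares e).1
  have hmem : ∀ χ ∈ evM e, χ ∈ IrrChar M := fun χ hχ => mem_irr.1 (Finset.mem_filter.1 hχ).1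
  have h1 := deg_sum (evM e) charDeg hsq (fun k => (k : ℤ) ^ 2)
  have h2 := deg_sum (evM e) charDeg hsq (fun k => 1)
  have h3 := deg_sum (evM e) charDeg hsq (fun k => 5 * (k : ℤ) - 16)
  have hsq' : ∑ χ ∈ evM e, (charDeg χ : ℤ) ^ 2 = 60 := by exact_mod_cast hsq
  rw [hsq'] at h1
  rw [h3]
  have hc := evM_card e
  have n0 : ((evM e).filter (fun χ => charDeg χ = 0)).card = 0 := by
    rw [Finset.card_eq_zero, Finset.filter_eq_empty_iff]
    intro χ hχ h
    exact (irr_charDeg_pos (hmem χ hχ)).ne' h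
  have n1 : ((evM e).filter (fun χ => charDeg χ = 1)).card = 1 := by
    rw [Finset.card_eq_one]
    refine ⟨fun _ => 1, ?_⟩
    ext χ
    rw [Finset.mem_filter, Finset.mem_singleton]
    constructor
    · rintro ⟨h, h'⟩
      exact deg_one e (hmem χ h) h'
    · rintro rfl
      refine ⟨?_, by simp [charDeg]⟩
      rw [evM, Finset.mem_filter, mem_irr]
      exact ⟨irr_trivial M, rfl⟩
  simp only [Finset.sum_range_succ, Finset.sum_range_zero, n0, n1, Finset.sum_const, nsmul_eq_mul,
    mul_one] at h1 h2 ⊢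
  push_cast at h1 h2 ⊢
  generalize ((evM e).filter (fun χ => charDeg χ = 2)).card = n2 at *
  generalize ((evM e).filter (fun χ => charDeg χ = 3)).card = n3 at *
  generalize ((evM e).filter (fun χ => charDeg χ = 4)).card = n4 at *
  generalize ((evM e).filter (fun χ => charDeg χ = 5)).card = n5 at *
  generalize ((evM e).filter (fun χ => charDeg χ = 6)).card = n6 at *
  generalize ((evM e).filter (fun χ => charDeg χ = 7)).card = n7 at *
  clear h3 hsq hsq' n0 n1
  have b7 : n7 ≤ 1 := by omega
  have b6 : n6 ≤ 1 := by omega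
  have b5 : n5 ≤ 2 := by omega
  have b4 : n4 ≤ 3 := by omega
  interval_cases n7 <;> interval_cases n6 <;> interval_cases n5 <;> interval_cases n4 <;> omega

theorem odM_sum : 0 ≤ ∑ χ ∈ odM e, (5 * (charDeg χ : ℤ) - 16) := by
  classical
  have hsq := (M_squares e).2
  have hmem : ∀ χ ∈ odM e, χ ∈ IrrChar M := fun χ hχ => mem_irr.1 (Finset.mem_filter.1 hχ).1
  have h1 := deg_sum (odM e) charDeg hsq (fun k => (k : ℤ) ^ 2)
  have h2 := deg_sum (odM e) charDeg hsq (fun k => 1)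
  have h3 := deg_sum (odM e) charDeg hsq (fun k => 5 * (k : ℤ) - 16)
  have hsq' : ∑ χ ∈ odM e, (charDeg χ : ℤ) ^ 2 = 60 := by exact_mod_cast hsq
  rw [hsq'] at h1
  rw [h3]
  have hc := odM_card e
  have n0 : ((odM e).filter (fun χ => charDeg χ = 0)).card = 0 := by
    rw [Finset.card_eq_zero, Finset.filter_eq_empty_iff]
    intro χ hχ h
    exact (irr_charDeg_pos (hmem χ hχ)).ne' h
  have nodd : ∀ k, ¬ Even k → ((odM e).filter (fun χ => charDeg χ = k)).card = 0 := by
    intro k hk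
    rw [Finset.card_eq_zero, Finset.filter_eq_empty_iff]
    rintro χ hχ rfl
    exact hk (odd_even_deg e (hmem χ hχ) (Finset.mem_filter.1 hχ).2)
  simp only [Finset.sum_range_succ, Finset.sum_range_zero, n0, nodd 1 (by decide),
    nodd 3 (by decide), nodd 5 (by decide), nodd 7 (by decide), Finset.sum_const, nsmul_eq_mul,
    mul_one] at h1 h2 ⊢
  push_cast at h1 h2 ⊢
  generalize ((odM e).filter (fun χ => charDeg χ = 2)).card = n2 at *
  generalize ((odM e).filter (fun χ => charDeg χ = 4)).card = n4 at *
  generalize ((odM e).filter (fun χ => charDeg χ = 6)).card = n6 at *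
  omega

end MFacts

section Final

open Representation Module

theorem descend_prod {A B G : Type} [Group A] [Group B] [Group G] [Fintype A] [Fintype B]
    [Fintype G] (π : A × B →* G) (hπ : Function.Surjective π) (z : A) (w : B)
    (hz : ∀ g, z * g = g * z) (hz2 : z * z = 1) (hw : ∀ g, w * g = g * w) (hw2 : w * w = 1)
    (hker : ∀ x ∈ π.ker, x = 1 ∨ x = (z, w))
    {α : A → ℂ} {β : B → ℂ} (hα : α ∈ IrrChar A) (hβ : β ∈ IrrChar B)
    (hm : α z = α 1 ↔ β w = β 1) :
    ∃ χ ∈ IrrChar G, ∀ x, χ (π x) = α x.1 * β x.2 := by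
  have hirr := irr_prod hα hβ
  obtain ⟨n, hn, hn'⟩ := irr_one_pos hα
  obtain ⟨n', hp, hp'⟩ := irr_one_pos hβ
  obtain ⟨⟨V, _, _, _, ρ, rfl⟩, -⟩ := (mem_irr_iff α).1 hα
  obtain ⟨⟨W, _, _, _, σ, rfl⟩, -⟩ := (mem_irr_iff β).1 hβ
  obtain ⟨ε, hε, hρ⟩ := irr_schur ρ hα z hz hz2
  obtain ⟨δ, hδ, hσ⟩ := irr_schur σ hβ w hw hw2
  let ρ' : Representation ℂ (A × B) V := ρ.comp (MonoidHom.fst A B)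
  let σ' : Representation ℂ (A × B) W := σ.comp (MonoidHom.snd A B)
  have hch : (tprod ρ' σ').character = fun x => ρ.character x.1 * σ.character x.2 := by
    rw [char_tensor]; rfl
  have hnz : (n : ℂ) ≠ 0 := by exact_mod_cast hn.ne'
  have hnz' : (n' : ℂ) ≠ 0 := by exact_mod_cast hp.ne'
  have h1 : ρ.character z = ε * ρ.character 1 := by simp [character, hρ]
  have h2 : σ.character w = δ * σ.character 1 := by simp [character, hσ]
  have hεδ : ε * δ = 1 := by
    rw [h1, h2, hn', hp', mul_eq_right₀ hnz, mul_eq_right₀ hnz'] at hm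
    rcases hε with rfl | rfl
    · rw [hm.1 rfl, one_mul]
    · rcases hδ with rfl | rfl
      · have := hm.2 rfl
        rw [this, one_mul]
      · norm_num
  obtain ⟨χ, hχ, h⟩ := irr_descend π hπ (tprod ρ' σ') (by rw [hch]; exact hirr) (by
    intro x hx
    rcases hker x hx with rfl | rfl
    · exact map_one _
    · change TensorProduct.map (ρ z) (σ w) = 1
      rw [hρ, hσ, TensorProduct.map_smul_left, TensorProduct.map_smul_right, smul_smul, hεδ,
        one_smul]
      exact TensorProduct.map_id)
  exact ⟨χ, hχ, fun x => by rw [h, hch]⟩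

theorem prod_inj {A B : Type} [Group A] [Group B] [Fintype A] [Fintype B]
    {α α' : A → ℂ} {β β' : B → ℂ} (hα : α ∈ IrrChar A) (hβ : β ∈ IrrChar B)
    (hα' : α' ∈ IrrChar A)
    (h : ∀ a b, α a * β b = α' a * β' b) : α = α' ∧ β = β' := by
  obtain ⟨n, hn, hn'⟩ := irr_one_pos hα
  obtain ⟨p, hp, hp'⟩ := irr_one_pos hβ
  have hnz : (n : ℂ) ≠ 0 := by exact_mod_cast hn.ne'
  have hpz : (p : ℂ) ≠ 0 := by exact_mod_cast hp.ne'
  have hc : (Nat.card A : ℂ) ≠ 0 := by exact_mod_cast Nat.card_pos.ne'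
  have hαα : α = α' := by
    by_contra hne
    have h1 := irr_ortho hα' hα (Ne.symm hne)
    have h2 := irr_norm hα
    have h3 : (∑ a, α a * α a⁻¹) * β 1 = (∑ a, α' a * α a⁻¹) * β' 1 := by
      rw [Finset.sum_mul, Finset.sum_mul]
      exact Finset.sum_congr rfl fun a _ => by linear_combination α a⁻¹ * h a 1
    rw [h1, h2, zero_mul, hp'] at h3
    exact mul_ne_zero hc hpz h3
  refine ⟨hαα, ?_⟩
  subst hαα
  ext b
  have := h 1 b
  rw [hn'] at this
  exact mul_left_cancel₀ hnz this

theorem main_sum {M C G : Type} [Group M] [Group C] [Group G] [Fintype M] [Fintype C]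
    [Fintype G] (e : M ≃* SL5) (π : M × C →* G) (hπ : Function.Surjective π) (w : C)
    (hw : ∀ g, w * g = g * w) (hw2 : w * w = 1)
    (hker : ∀ x ∈ π.ker, x = 1 ∨ x = (zM e, w)) (hzw : π (zM e, w) = 1) :
    0 ≤ ∑ χ ∈ irr G, (5 * (charDeg χ : ℤ) - 16) := by
  classical
  let P : Finset ((M → ℂ) × (C → ℂ)) :=
    (irr M ×ˢ irr C).filter (fun p => (p.1 (zM e) = p.1 1 ↔ p.2 w = p.2 1))
  have hP : ∀ p, p ∈ P ↔ (p.1 ∈ IrrChar M ∧ p.2 ∈ IrrChar C) ∧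
      (p.1 (zM e) = p.1 1 ↔ p.2 w = p.2 1) := by
    intro p; simp [P, mem_irr]
  have hex : ∀ p ∈ P, ∃ χ ∈ IrrChar G, ∀ x, χ (π x) = p.1 x.1 * p.2 x.2 := by
    intro p hp
    obtain ⟨⟨h1, h2⟩, h3⟩ := (hP p).1 hp
    exact descend_prod π hπ (zM e) w (zM_comm e) (zM_sq e) hw hw2 hker h1 h2 h3
  choose Φ hΦ1 hΦ2 using hex
  have hbij : ∑ p ∈ P, (5 * ((charDeg p.1 : ℤ) * charDeg p.2) - 16) =
      ∑ χ ∈ irr G, (5 * (charDeg χ : ℤ) - 16) := by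
    refine Finset.sum_bij Φ (fun p hp => mem_irr.2 (hΦ1 p hp)) ?_ ?_ ?_
    · intro p hp q hq h
      obtain ⟨⟨h1, h2⟩, -⟩ := (hP p).1 hp
      obtain ⟨⟨h1', -⟩, -⟩ := (hP q).1 hq
      have := prod_inj h1 h2 h1' (β' := q.2) (fun a b => by
        rw [← hΦ2 p hp (a, b), ← hΦ2 q hq (a, b), h])
      exact Prod.ext this.1 this.2
    · intro χ hχ
      obtain ⟨α, hα, β, hβ, h⟩ := irr_prod_exists (irr_pullback π hπ (mem_irr.1 hχ))
      rw [mem_irr] at hα hβ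
      obtain ⟨n, hn, hn'⟩ := irr_one_pos hα
      obtain ⟨p, hp, hp'⟩ := irr_one_pos hβ
      have hnz : (n : ℂ) ≠ 0 := by exact_mod_cast hn.ne'
      have hpz : (p : ℂ) ≠ 0 := by exact_mod_cast hp.ne'
      have hx : ∀ x, χ (π x) = α x.1 * β x.2 := fun x => congrFun h x
      have hmem : (α, β) ∈ P := by
        rw [hP]
        refine ⟨⟨hα, hβ⟩, ?_⟩
        have h1 : π (zM e, 1) = π (1, w) := by
          have h4 : ((zM e, 1) : M × C) * (1, w) = (zM e, w) := by simp
          have h5 : ((1, w) : M × C) * (1, w) = 1 := by simp [hw2]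
          have h2 : π (zM e, 1) * π (1, w) = π (1, w) * π (1, w) := by
            rw [← map_mul, ← map_mul, h4, h5, hzw, map_one]
          exact mul_right_cancel h2
        have h2 := hx (zM e, 1)
        rw [h1, hx (1, w)] at h2
        simp only [hn', hp'] at h2 ⊢
        constructor
        · intro h3
          rw [h3] at h2
          exact mul_left_cancel₀ hnz h2
        · intro h3
          rw [h3] at h2
          exact (mul_right_cancel₀ hpz h2).symm
      refine ⟨(α, β), hmem, ?_⟩
      ext g
      obtain ⟨x, rfl⟩ := hπ g
      rw [hΦ2 _ hmem, hx]
    · intro p hp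
      obtain ⟨⟨h1, h2⟩, -⟩ := (hP p).1 hp
      have h3 : charDeg (Φ p hp) = charDeg p.1 * charDeg p.2 := by
        apply charDeg_eq_s10
        have := hΦ2 p hp 1
        rw [map_one] at this
        rw [this, Prod.fst_one, Prod.snd_one, irr_charDeg h1, irr_charDeg h2]
        push_cast; rfl
      rw [h3]; push_cast; rfl
  rw [← hbij, Finset.sum_filter, Finset.sum_product_right]
  refine Finset.sum_nonneg fun β hβ => ?_
  rw [← Finset.sum_filter]
  have hb : 1 ≤ charDeg β := irr_charDeg_pos (mem_irr.1 hβ)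
  have hb' : (1 : ℤ) ≤ charDeg β := by exact_mod_cast hb
  have hmain : 0 ≤ ∑ α ∈ (irr M).filter (fun α => (α (zM e) = α 1 ↔ β w = β 1)),
      (5 * (charDeg α : ℤ) - 16) := by
    by_cases h : β w = β 1
    · have := evM_sum e
      simpa [evM, h] using this
    · have := odM_sum e
      simpa [odM, h] using this
  refine hmain.trans (Finset.sum_le_sum fun α _ => ?_)
  have : (0 : ℤ) ≤ charDeg α := by positivity
  nlinarith

theorem acd_ge_of_sum (G : Type) [Group G] [Fintype G]
    (h : 0 ≤ ∑ χ ∈ irr G, (5 * (charDeg χ : ℤ) - 16)) : 16 / 5 ≤ acd G := by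
  have hset : {χ ∈ IrrChar G | True} = (irr G : Set (G → ℂ)) := by
    ext χ; simp [mem_irr]
  unfold acd acdRel
  rw [hset, finsum_mem_coe_finset, Set.ncard_coe_finset]
  have hpos : 0 < (irr G).card := Finset.card_pos.2 ⟨_, mem_irr.2 (irr_trivial G)⟩
  have hpos' : (0 : ℝ) < (irr G).card := by exact_mod_cast hpos
  rw [le_div_iff₀ hpos']
  rw [Finset.sum_sub_distrib, ← Finset.mul_sum, Finset.sum_const, nsmul_eq_mul] at h
  have h' : (0 : ℝ) ≤ 5 * ∑ χ ∈ irr G, (charDeg χ : ℝ) - (irr G).card * 16 := by exact_mod_cast h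
  linarith

end Final

/-- If the finite group `G` is a central product `G = MC` with `M ≅ SL(2,5)` and
`M ∩ C = Z(M)`, then `acd(G) ≥ 16/5`. -/
theorem acd_ge_of_central_product_SL25 (G : Type) [Group G] [Finite G] (M C : Subgroup G)
    (hprod : ∀ g : G, ∃ m ∈ M, ∃ c ∈ C, g = m * c)
    (hcomm : ∀ m ∈ M, ∀ c ∈ C, m * c = c * m)
    (hM : Nonempty (M ≃* Matrix.SpecialLinearGroup (Fin 2) (ZMod 5)))
    (hZ : M ⊓ C = (Subgroup.center ↥M).map M.subtype) :
    16 / 5 ≤ acd G := by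
  have := Fintype.ofFinite G
  have := Fintype.ofFinite M
  have := Fintype.ofFinite C
  obtain ⟨e⟩ := hM
  refine acd_ge_of_sum G ?_
  let π : M × C →* G :=
    { toFun := fun x => x.1.1 * x.2.1
      map_one' := by simp
      map_mul' := fun x y => by
        have h := hcomm y.1.1 y.1.2 x.2.1 x.2.2
        simp only [Prod.fst_mul, Prod.snd_mul, Subgroup.coe_mul]
        rw [mul_assoc x.1.1 y.1.1, ← mul_assoc y.1.1 x.2.1, h]
        simp only [mul_assoc] }
  have hzC : (zM e : M).1 ∈ C := by
    have : (zM e : M).1 ∈ M ⊓ C := by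
      rw [hZ]
      exact ⟨zM e, Subgroup.mem_center_iff.2 fun g => (zM_comm e g).symm, rfl⟩
    exact this.2
  have hsq : (zM e : M).1 * (zM e : M).1 = 1 := congrArg Subtype.val (zM_sq e)
  refine main_sum e π ?_ ⟨(zM e : M).1, hzC⟩ ?_ ?_ ?_ ?_
  · intro g
    obtain ⟨m, hm, c, hc, rfl⟩ := hprod g
    exact ⟨(⟨m, hm⟩, ⟨c, hc⟩), rfl⟩
  · intro c
    exact Subtype.ext (hcomm _ (zM e).2 c.1 c.2)
  · exact Subtype.ext hsq
  · rintro ⟨m, c⟩ hx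
    have hx : m.1 * c.1 = 1 := hx
    have hc : c.1 = m.1⁻¹ := eq_inv_of_mul_eq_one_right hx
    have hmC : m.1 ∈ M ⊓ C := ⟨m.2, by
      have := C.inv_mem c.2
      rwa [hc, inv_inv] at this⟩
    rw [hZ] at hmC
    obtain ⟨m', hm', hmm⟩ := hmC
    obtain rfl : m' = m := Subtype.ext hmm
    have hcen : ∀ x : SL5, e m' * x = x * e m' := fun x => by
      have := Subgroup.mem_center_iff.1 hm' (e.symm x)
      have := congrArg e this
      simpa using this.symm
    rcases sl_center _ hcen with h | h
    · left
      have h1 : m' = 1 := by simpa using h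
      subst h1
      refine Prod.ext rfl (Subtype.ext ?_)
      simpa using hc
    · right
      have h1 : m' = zM e := by rw [zM, ← h, MulEquiv.symm_apply_apply]
      subst h1
      refine Prod.ext rfl (Subtype.ext ?_)
      rw [hc]
      exact inv_eq_of_mul_eq_one_right hsq
  · exact hsq
end
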